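/- (1/(4π⁴))·∫₀^π∫₀^π∫₀^π∫₀^π (1 − (1/4)(cos φ₁ + cos φ₂ + cos φ₃ + cos φ₄))^{-1} dφ₁ dφ₂ dφ₃ dφ₄ = (12/π⁴)·∫₀^∞ I₀(t) [K₀(t)]⁵ t dt. -/

import Mathlib

open Real MeasureTheory Set

/-- Modified Bessel function `I₀(t) = (1/π)∫₀^π exp(t cos θ) dθ`. -/
noncomputable def I0 (t : ℝ) : ℝ := (1 / π) * ∫ θ in (0:ℝ)..π, exp (t * cos θ)

/-- Modified Bessel function `K₀(t) = ∫₀^∞ exp(−t cosh u) du`. -/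
noncomputable def K0 (t : ℝ) : ℝ := ∫ u in Ioi (0:ℝ), exp (-(t * Real.cosh u))

/-- Rising factorial `(a)ₙ = a(a+1)⋯(a+n−1)`. -/
noncomputable def ris (a : ℝ) (n : ℕ) : ℝ := ∏ k ∈ Finset.range n, (a + k)

/-- Generalized hypergeometric series `ₚF_q(a; b | x)`. -/
noncomputable def pFq (a b : List ℝ) (x : ℝ) : ℝ :=
  ∑' n : ℕ, ((a.map fun p => ris p n).prod / (b.map fun q => ris q n).prod) * x ^ n
    / (n.factorial : ℝ)

/-!
Integrating out the angles turns the Watson integral into `W = ∫₀^∞ exp(-4t) I₀(t)⁴ dt`. Two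
further facts link `W` to the right-hand side.

* `∫ t I₀³ K₀³ = 4 W ∫ t I₀ K₀³`. Expanding `I₀²` on the left and `I₀⁴` in `W` into power series,
  this reduces to the fact that, suitably normalised, the odd moments of `I₀ K₀³` satisfy the same
  three-term recurrence as the Taylor coefficients of `I₀⁴`, since both functions solve the fourth
  symmetric power of Bessel's equation.
* The function `N(z) = K₀(z) K₀(e^(-iπ) z)` is analytic in the open first quadrant, is real on the
  imaginary axis, equals `K₀ (K₀ + i π I₀)` on the positive axis, and behaves like `iπ/(2z)` at
  infinity. Integrating `z N(z)²` and `z N(z)³` around the quadrant gives `∫ t I₀ K₀³ = π²/16` and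
  `3 ∫ t I₀ K₀⁵ = π² ∫ t I₀³ K₀³`.
-/

open Filter Topology

/-! ### Functions of algebraic growth at `0` and exponential decay at infinity -/

/-- `f` is continuous on `(0, ∞)` and bounded there by a multiple of `t ^ (-a) * exp (-b t)`.
This is the class in which all Mellin moments and boundary terms below are controlled; negative
`a` and `b` are allowed, so that growing factors fit in as well. -/
def HasDecay (f : ℝ → ℝ) (a b : ℝ) : Prop :=
  ContinuousOn f (Ioi 0) ∧ ∃ C : ℝ, ∀ t > 0, |f t| ≤ C * (t ^ (-a) * exp (-b * t))

namespace HasDecay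

variable {f g : ℝ → ℝ} {a b c d : ℝ}

lemma mul (hf : HasDecay f a b) (hg : HasDecay g c d) :
    HasDecay (fun t ↦ f t * g t) (a + c) (b + d) := by
  obtain ⟨hfc, C, hC⟩ := hf
  obtain ⟨hgc, D, hD⟩ := hg
  refine ⟨hfc.mul hgc, C * D, fun t ht ↦ ?_⟩
  calc |f t * g t| ≤ (C * (t ^ (-a) * exp (-b * t))) * (D * (t ^ (-c) * exp (-d * t))) := by
        rw [abs_mul]
        exact mul_le_mul (hC t ht) (hD t ht) (abs_nonneg _) ((abs_nonneg _).trans (hC t ht))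
    _ = C * D * (t ^ (-(a + c)) * exp (-(b + d) * t)) := by
        rw [neg_add, rpow_add ht, show -(b + d) * t = -b * t + -d * t by ring, Real.exp_add]
        ring

lemma add (hf : HasDecay f a b) (hg : HasDecay g a b) : HasDecay (fun t ↦ f t + g t) a b := by
  obtain ⟨hfc, C, hC⟩ := hf
  obtain ⟨hgc, D, hD⟩ := hg
  refine ⟨hfc.add hgc, C + D, fun t ht ↦ ?_⟩
  rw [add_mul]
  exact (abs_add_le _ _).trans (add_le_add (hC t ht) (hD t ht))

lemma const_mul (r : ℝ) (hf : HasDecay f a b) : HasDecay (fun t ↦ r * f t) a b := by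
  obtain ⟨hfc, C, hC⟩ := hf
  refine ⟨continuousOn_const.mul hfc, |r| * C, fun t ht ↦ ?_⟩
  rw [abs_mul, mul_assoc]
  exact mul_le_mul_of_nonneg_left (hC t ht) (abs_nonneg r)

lemma pow_id (k : ℕ) : HasDecay (fun t ↦ t ^ k) (-k) 0 := by
  refine ⟨by fun_prop, 1, fun t ht ↦ ?_⟩
  simp [abs_of_pos ht]

lemma pow (hf : HasDecay f a b) (n : ℕ) : HasDecay (fun t ↦ f t ^ n) (n * a) (n * b) := by
  induction n with
  | zero => simpa using pow_id 0
  | succ n ih =>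
    simp only [pow_succ]
    convert ih.mul hf using 1 <;> push_cast <;> ring

lemma mono_exp (hf : HasDecay f a b) (hcb : c ≤ b) : HasDecay f a c := by
  obtain ⟨hfc, C, hC⟩ := hf
  refine ⟨hfc, C, fun t (ht : 0 < t) ↦ (hC t ht).trans ?_⟩
  have hC0 : 0 ≤ C := nonneg_of_mul_nonneg_left ((abs_nonneg _).trans (hC t ht)) (by positivity)
  gcongr

lemma add_one_sub (hf : HasDecay f a b) {ε : ℝ} (hε : 0 < ε) : HasDecay f (a + 1) (b - ε) := by
  obtain ⟨hfc, C, hC⟩ := hf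
  refine ⟨hfc, C * ε⁻¹, fun t (ht : 0 < t) ↦ ?_⟩
  have hC0 : 0 ≤ C := nonneg_of_mul_nonneg_left ((abs_nonneg _).trans (hC t ht)) (by positivity)
  have hlin : t ≤ ε⁻¹ * exp (ε * t) := by
    rw [le_inv_mul_iff₀ hε]
    linarith [add_one_le_exp (ε * t)]
  calc |f t| ≤ C * (t ^ (-a) * exp (-b * t)) := hC t ht
    _ = C * (t * (t ^ (-(a + 1)) * exp (-b * t))) := by
        rw [show -a = 1 + -(a + 1) by ring, rpow_add ht, rpow_one, mul_assoc]
    _ ≤ C * (ε⁻¹ * exp (ε * t) * (t ^ (-(a + 1)) * exp (-b * t))) := by gcongr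
    _ = C * ε⁻¹ * (t ^ (-(a + 1)) * exp (-(b - ε) * t)) := by
        rw [show -(b - ε) * t = ε * t + -b * t by ring, Real.exp_add]
        ring

lemma integrableOn (hf : HasDecay f a b) (ha : a < 1) (hb : 0 < b) : IntegrableOn f (Ioi 0) := by
  obtain ⟨hfc, C, hC⟩ := hf
  have hdom : IntegrableOn (fun t : ℝ ↦ t ^ (-a) * exp (-b * t)) (Ioi 0) := by
    simpa using integrableOn_rpow_mul_exp_neg_mul_rpow (p := 1) (by linarith : -1 < -a) one_pos hb
  exact (hdom.const_mul C).mono' (hfc.aestronglyMeasurable measurableSet_Ioi)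
    (ae_restrict_of_forall_mem measurableSet_Ioi hC)

lemma tendsto_zero (hf : HasDecay f a b) (ha : a < 0) : Tendsto f (𝓝[>] 0) (𝓝 0) := by
  obtain ⟨-, C, hC⟩ := hf
  refine squeeze_zero_norm' (eventually_mem_nhdsWithin.mono hC) ?_
  have hcont : Continuous fun t : ℝ ↦ C * (t ^ (-a) * exp (-b * t)) := by
    have := continuous_rpow_const (q := -a) (by linarith)
    fun_prop
  have h := hcont.tendsto 0
  rw [zero_rpow (by linarith), zero_mul, mul_zero] at h
  exact h.mono_left nhdsWithin_le_nhds

lemma tendsto_atTop (hf : HasDecay f a b) (hb : 0 < b) : Tendsto f atTop (𝓝 0) := by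
  obtain ⟨-, C, hC⟩ := hf
  refine squeeze_zero_norm' ((eventually_gt_atTop 0).mono hC) ?_
  simpa using (tendsto_rpow_mul_exp_neg_mul_atTop_nhds_zero (-a) b hb).const_mul C

lemma integral_deriv_eq_zero {f' : ℝ → ℝ} (hf : HasDecay f a b) (ha : a < 0) (hb : 0 < b)
    (hderiv : ∀ t > 0, HasDerivAt f (f' t) t) (hf' : IntegrableOn f' (Ioi 0)) :
    ∫ t in Ioi 0, f' t = 0 := by
  have h := integral_Ioi_deriv_mul_eq_sub (u := fun _ ↦ 1) (u' := fun _ ↦ 0) (v := f) (v' := f')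
    (a := (0 : ℝ)) (a' := 0) (b' := 0) (fun t _ ↦ hasDerivAt_const t 1) hderiv
    (by simpa [Pi.mul_def, Pi.add_def] using hf') (by simpa [Pi.mul_def] using hf.tendsto_zero ha)
    (by simpa [Pi.mul_def] using hf.tendsto_atTop hb)
  simpa using h

end HasDecay

/-! ### Bessel functions and their Euler derivatives -/

/-- The integral `∫₀^∞ cosh(u)^j exp(-t cosh u) du`; the case `j = 0` is `K₀`, and `t`-derivatives
raise `j`. -/
noncomputable def coshLaplace (j : ℕ) (t : ℝ) : ℝ :=
  ∫ u in Ioi (0 : ℝ), cosh u ^ j * exp (-(t * cosh u))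

/-- The integral `∫₀^π cos(θ)^j exp(t cos θ) dθ`; the case `j = 0` is `π I₀`, and `t`-derivatives
raise `j`. -/
noncomputable def cosLaplace (j : ℕ) (t : ℝ) : ℝ :=
  ∫ θ in (0 : ℝ)..π, cos θ ^ j * exp (t * cos θ)

/-- The Euler derivative `t I₀'(t)`. -/
noncomputable def thetaI0 (t : ℝ) : ℝ := 1 / π * (t * cosLaplace 1 t)

/-- The Euler derivative `t K₀'(t)`. -/
noncomputable def thetaK0 (t : ℝ) : ℝ := -(t * coshLaplace 1 t)

lemma coshLaplace_zero : coshLaplace 0 = K0 := by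
  funext t
  simp only [coshLaplace, K0, pow_zero, one_mul]

lemma I0_eq_cosLaplace (t : ℝ) : I0 t = 1 / π * cosLaplace 0 t := by
  simp only [cosLaplace, I0, pow_zero, one_mul]

lemma cosh_pow_mul_exp_nonneg (j : ℕ) (t u : ℝ) : 0 ≤ cosh u ^ j * exp (-(t * cosh u)) :=
  mul_nonneg (pow_nonneg (cosh_pos u).le j) (exp_pos _).le

lemma K0_nonneg (t : ℝ) : 0 ≤ K0 t := integral_nonneg fun _ ↦ (exp_pos _).le

lemma I0_nonneg (t : ℝ) : 0 ≤ I0 t :=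
  mul_nonneg (by positivity) (intervalIntegral.integral_nonneg pi_pos.le fun _ _ ↦ (exp_pos _).le)

lemma exp_half_le_cosh (u : ℝ) : exp u / 2 ≤ cosh u := by
  rw [cosh_eq]
  linarith [exp_pos (-u)]

lemma pow_mul_exp_neg_le (j : ℕ) {w : ℝ} (hw : 0 ≤ w) :
    w ^ j * exp (-(w / 8)) ≤ 8 ^ j * j.factorial := by
  have h := pow_div_factorial_le_exp (w / 8) (by positivity) j
  rw [div_pow, div_div, div_le_iff₀ (by positivity)] at h
  rw [exp_neg, ← div_eq_mul_inv, div_le_iff₀ (exp_pos _)]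
  linarith

lemma exp_neg_quarter_le_rpow {w : ℝ} (hw : 0 < w) : exp (-(w / 4)) ≤ w ^ (-(1 / 8) : ℝ) := by
  have hlog : log w ≤ w := (log_le_sub_one_of_pos hw).trans (by linarith)
  rw [rpow_def_of_pos hw, exp_le_exp]
  linarith

lemma cosh_rpow_neg_le (u : ℝ) : cosh u ^ (-(1 / 8) : ℝ) ≤ 2 * exp (-(1 / 8) * u) :=
  calc cosh u ^ (-(1 / 8) : ℝ) ≤ (exp u / 2) ^ (-(1 / 8) : ℝ) :=
        rpow_le_rpow_of_nonpos (by positivity) (exp_half_le_cosh u) (by norm_num)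
    _ = 2 ^ (1 / 8 : ℝ) * exp (-(1 / 8) * u) := by
        rw [div_rpow (exp_pos _).le two_pos.le, ← exp_mul, rpow_neg two_pos.le, div_inv_eq_mul,
          mul_comm u, mul_comm]
    _ ≤ 2 * exp (-(1 / 8) * u) := by
        gcongr
        exact rpow_le_self_of_one_le one_le_two (by norm_num)

/-- The exponent splits as `1/8 + 1/4 + 5/8`: the three parts absorb the power of `cosh`, provide
integrability in `u`, and give the decay in `t`. -/
lemma cosh_pow_mul_exp_le (j : ℕ) {t : ℝ} (ht : 0 < t) (u : ℝ) :
    t ^ j * (cosh u ^ j * exp (-(t * cosh u))) ≤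
      8 ^ j * j.factorial * (t ^ (-(1 / 8) : ℝ) * (2 * exp (-(1 / 8) * u)) *
        exp (-(5 / 8) * t)) := by
  have hcosh := one_le_cosh u
  have hw : 0 < t * cosh u := by positivity
  have hsplit : exp (-(t * cosh u)) = exp (-(t * cosh u / 8)) *
      (exp (-(t * cosh u / 4)) * exp (-(5 / 8) * (t * cosh u))) := by
    rw [← Real.exp_add, ← Real.exp_add]
    ring_nf
  have hquarter : exp (-(t * cosh u / 4)) ≤ t ^ (-(1 / 8) : ℝ) * (2 * exp (-(1 / 8) * u)) := by
    refine (exp_neg_quarter_le_rpow hw).trans ?_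
    rw [mul_rpow ht.le (by positivity)]
    gcongr
    exact cosh_rpow_neg_le u
  have hdecay : exp (-(5 / 8) * (t * cosh u)) ≤ exp (-(5 / 8) * t) := by
    rw [exp_le_exp]
    nlinarith
  calc t ^ j * (cosh u ^ j * exp (-(t * cosh u)))
      = (t * cosh u) ^ j * exp (-(t * cosh u / 8)) *
          (exp (-(t * cosh u / 4)) * exp (-(5 / 8) * (t * cosh u))) := by
        rw [hsplit]
        ring
    _ ≤ _ := mul_le_mul (pow_mul_exp_neg_le j hw.le)
        (mul_le_mul hquarter hdecay (exp_pos _).le (by positivity)) (by positivity) (by positivity)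

lemma integrableOn_cosh_pow_mul_exp (j : ℕ) {t : ℝ} (ht : 0 < t) :
    IntegrableOn (fun u ↦ cosh u ^ j * exp (-(t * cosh u))) (Ioi 0) := by
  have hdom : IntegrableOn (fun u : ℝ ↦ exp (-(1 / 8) * u)) (Ioi 0) :=
    integrableOn_exp_mul_Ioi (by norm_num) 0
  have h : IntegrableOn (fun u ↦ t ^ j * (cosh u ^ j * exp (-(t * cosh u)))) (Ioi 0) := by
    refine Integrable.mono' ((((hdom.const_mul 2).const_mul (t ^ (-(1 / 8) : ℝ))).mul_const
      (exp (-(5 / 8) * t))).const_mul (8 ^ j * j.factorial))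
      (Continuous.aestronglyMeasurable (by fun_prop)) (Eventually.of_forall fun u ↦ ?_)
    rw [norm_of_nonneg (mul_nonneg (by positivity) (cosh_pow_mul_exp_nonneg j t u))]
    exact cosh_pow_mul_exp_le j ht u
  exact (h.const_mul (t ^ j)⁻¹).congr
    (Eventually.of_forall fun u ↦ inv_mul_cancel_left₀ (by positivity) _)

lemma hasDerivAt_coshLaplace (j : ℕ) {t : ℝ} (ht : 0 < t) :
    HasDerivAt (coshLaplace j) (-coshLaplace (j + 1) t) t := by
  rw [coshLaplace, ← integral_neg]
  refine (hasDerivAt_integral_of_dominated_loc_of_deriv_le (μ := volume.restrict (Ioi (0 : ℝ)))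
    (F := fun t u ↦ cosh u ^ j * exp (-(t * cosh u)))
    (F' := fun t u ↦ -(cosh u ^ (j + 1) * exp (-(t * cosh u))))
    (bound := fun u ↦ cosh u ^ (j + 1) * exp (-(t / 2 * cosh u)))
    (Ioi_mem_nhds (half_lt_self ht)) ?_ (integrableOn_cosh_pow_mul_exp j ht) ?_ ?_
    (integrableOn_cosh_pow_mul_exp (j + 1) (half_pos ht)) ?_).2
  · exact Eventually.of_forall fun x ↦ Continuous.aestronglyMeasurable (by fun_prop)
  · exact Continuous.aestronglyMeasurable (by fun_prop)
  · refine Eventually.of_forall fun u x (hx : t / 2 < x) ↦ ?_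
    rw [norm_neg, norm_of_nonneg (cosh_pow_mul_exp_nonneg _ _ _)]
    gcongr
  · refine Eventually.of_forall fun u x _ ↦ ?_
    have h := ((hasDerivAt_mul_const (x := x) (cosh u)).neg.exp).const_mul (cosh u ^ j)
    refine h.congr_deriv ?_
    simp only [Pi.neg_apply]
    ring

lemma tendsto_sinh_mul_exp_neg_cosh {t : ℝ} (ht : 0 < t) :
    Tendsto (fun u ↦ sinh u * exp (-(t * cosh u))) atTop (𝓝 0) := by
  have hdom : Tendsto (fun u : ℝ ↦ (t ^ 1)⁻¹ * (8 ^ 1 * (1 : ℕ).factorial * (t ^ (-(1 / 8) : ℝ) *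
      (2 * exp (-(1 / 8) * u)) * exp (-(5 / 8) * t)))) atTop (𝓝 0) := by
    have hexp : Tendsto (fun u : ℝ ↦ exp (-(1 / 8) * u)) atTop (𝓝 0) :=
      tendsto_exp_atBot.comp (tendsto_id.const_mul_atTop_of_neg (by norm_num))
    simpa using ((((hexp.const_mul 2).const_mul _).mul_const _).const_mul _).const_mul _
  refine squeeze_zero_norm (fun u ↦ ?_) hdom
  rw [le_inv_mul_iff₀ (by positivity)]
  refine le_trans ?_ (cosh_pow_mul_exp_le 1 ht u)
  rw [norm_mul, norm_of_nonneg (exp_pos _).le, norm_eq_abs, abs_sinh, pow_one (cosh u), ← cosh_abs]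
  gcongr
  exact (sinh_lt_cosh _).le

/-- Integration by parts against `sinh u * exp (-t cosh u)`. -/
lemma mul_coshLaplace_two {t : ℝ} (ht : 0 < t) :
    t * coshLaplace 2 t = t * coshLaplace 0 t + coshLaplace 1 t := by
  have hint (j : ℕ) := integrableOn_cosh_pow_mul_exp j ht
  have hint_sub : IntegrableOn (fun u ↦ t * (cosh u ^ 2 * exp (-(t * cosh u)) -
      cosh u ^ 0 * exp (-(t * cosh u)))) (Ioi 0) := ((hint 2).sub (hint 0)).const_mul t
  have hderiv (u : ℝ) : HasDerivAt (fun u ↦ sinh u * exp (-(t * cosh u)))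
      (cosh u ^ 1 * exp (-(t * cosh u)) -
        t * (cosh u ^ 2 * exp (-(t * cosh u)) - cosh u ^ 0 * exp (-(t * cosh u)))) u := by
    refine ((hasDerivAt_sinh u).mul
      (((hasDerivAt_cosh u).const_mul t).neg.exp)).congr_deriv ?_
    simp only [Pi.neg_apply, cosh_sq]
    ring
  have hzero := integral_Ioi_of_hasDerivAt_of_tendsto' (fun u _ ↦ hderiv u) ((hint 1).sub hint_sub)
    (tendsto_sinh_mul_exp_neg_cosh ht)
  rw [integral_sub (hint 1) hint_sub, integral_const_mul, integral_sub (hint 2) (hint 0),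
    sinh_zero, zero_mul, sub_zero] at hzero
  simp only [coshLaplace]
  linarith

lemma hasDerivAt_K0 {t : ℝ} (ht : 0 < t) : HasDerivAt K0 (thetaK0 t / t) t := by
  rw [← coshLaplace_zero]
  refine (hasDerivAt_coshLaplace 0 ht).congr_deriv ?_
  rw [thetaK0]
  field_simp

lemma hasDerivAt_thetaK0 {t : ℝ} (ht : 0 < t) : HasDerivAt thetaK0 (t * K0 t) t := by
  refine ((hasDerivAt_id t).mul (hasDerivAt_coshLaplace 1 ht)).neg.congr_deriv ?_
  rw [← coshLaplace_zero, id]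
  linarith [mul_coshLaplace_two ht]

lemma norm_cos_pow_mul_exp_le (j : ℕ) (t θ : ℝ) : ‖cos θ ^ j * exp (t * cos θ)‖ ≤ exp |t| := by
  have hexp : t * cos θ ≤ |t| :=
    calc t * cos θ ≤ |t| * |cos θ| := (le_abs_self _).trans (abs_mul _ _).le
      _ ≤ |t| := mul_le_of_le_one_right (abs_nonneg t) (abs_cos_le_one θ)
  rw [norm_mul, norm_pow, norm_of_nonneg (exp_pos _).le, norm_eq_abs]
  exact (mul_le_of_le_one_left (exp_pos _).le (pow_le_one₀ (abs_nonneg _)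
    (abs_cos_le_one θ))).trans (exp_le_exp.2 hexp)

lemma hasDerivAt_cosLaplace (j : ℕ) (t : ℝ) :
    HasDerivAt (cosLaplace j) (cosLaplace (j + 1) t) t := by
  refine (intervalIntegral.hasDerivAt_integral_of_dominated_loc_of_deriv_le
    (F := fun t θ ↦ cos θ ^ j * exp (t * cos θ))
    (F' := fun t θ ↦ cos θ ^ (j + 1) * exp (t * cos θ))
    (bound := fun _ ↦ exp (|t| + 1)) (Metric.ball_mem_nhds t one_pos)
    ?_ (Continuous.intervalIntegrable (by fun_prop) _ _) ?_ ?_ intervalIntegrable_const ?_).2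
  · exact Eventually.of_forall fun x ↦ Continuous.aestronglyMeasurable (by fun_prop)
  · exact Continuous.aestronglyMeasurable (by fun_prop)
  · refine Eventually.of_forall fun θ _ x hx ↦ ?_
    have hx' : |x| ≤ |t| + 1 := by
      have hdist : |x - t| < 1 := by simpa [Real.dist_eq] using hx
      linarith [abs_sub_abs_le_abs_sub x t]
    exact (norm_cos_pow_mul_exp_le (j + 1) x θ).trans (exp_le_exp.2 hx')
  · refine Eventually.of_forall fun θ _ x _ ↦ ?_
    refine (((hasDerivAt_mul_const (cos θ)).exp).const_mul (cos θ ^ j)).congr_deriv ?_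
    ring

/-- Integration by parts against `sin θ * exp (t cos θ)`. -/
lemma mul_cosLaplace_two (t : ℝ) : t * cosLaplace 2 t = t * cosLaplace 0 t - cosLaplace 1 t := by
  have hii (j : ℕ) : IntervalIntegrable (fun θ ↦ cos θ ^ j * exp (t * cos θ)) volume 0 π :=
    Continuous.intervalIntegrable (by fun_prop) _ _
  have hderiv (θ : ℝ) : HasDerivAt (fun θ ↦ sin θ * exp (t * cos θ))
      (cos θ ^ 1 * exp (t * cos θ) +
        t * (cos θ ^ 2 * exp (t * cos θ) - cos θ ^ 0 * exp (t * cos θ))) θ := by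
    refine ((hasDerivAt_sin θ).mul ((hasDerivAt_cos θ).const_mul t).exp).congr_deriv ?_
    rw [cos_sq']
    ring
  have hzero := intervalIntegral.integral_eq_sub_of_hasDerivAt (fun θ _ ↦ hderiv θ)
    ((hii 1).add (((hii 2).sub (hii 0)).const_mul t))
  rw [intervalIntegral.integral_add (hii 1) (((hii 2).sub (hii 0)).const_mul t),
    intervalIntegral.integral_const_mul, intervalIntegral.integral_sub (hii 2) (hii 0),
    sin_pi, sin_zero, zero_mul, zero_mul, sub_zero] at hzero
  simp only [cosLaplace]
  linarith

lemma hasDerivAt_I0 {t : ℝ} (ht : 0 < t) : HasDerivAt I0 (thetaI0 t / t) t := by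
  rw [funext I0_eq_cosLaplace]
  refine ((hasDerivAt_cosLaplace 0 t).const_mul (1 / π)).congr_deriv ?_
  rw [thetaI0]
  field_simp

lemma hasDerivAt_thetaI0 (t : ℝ) : HasDerivAt thetaI0 (t * I0 t) t := by
  refine (((hasDerivAt_id t).mul (hasDerivAt_cosLaplace 1 t)).const_mul (1 / π)).congr_deriv ?_
  rw [I0_eq_cosLaplace, id]
  linear_combination (1 / π) * mul_cosLaplace_two t

lemma pow_mul_coshLaplace_le (j : ℕ) {t : ℝ} (ht : 0 < t) :
    t ^ j * coshLaplace j t ≤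
      8 ^ j * j.factorial * 16 * (t ^ (-(1 / 8) : ℝ) * exp (-(5 / 8) * t)) := by
  have hdom : IntegrableOn (fun u : ℝ ↦ exp (-(1 / 8) * u)) (Ioi 0) :=
    integrableOn_exp_mul_Ioi (by norm_num) 0
  have hmono := integral_mono ((integrableOn_cosh_pow_mul_exp j ht).const_mul (t ^ j))
    ((((hdom.const_mul 2).const_mul _).mul_const _).const_mul _) (cosh_pow_mul_exp_le j ht)
  rw [integral_const_mul, integral_const_mul, integral_mul_const, integral_const_mul,
    integral_const_mul, integral_exp_mul_Ioi (by norm_num), mul_zero, exp_zero] at hmono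
  rw [coshLaplace]
  linarith

lemma abs_cosLaplace_le (j : ℕ) {t : ℝ} (ht : 0 ≤ t) : |cosLaplace j t| ≤ π * exp t := by
  have h := intervalIntegral.norm_integral_le_of_norm_le_const (a := 0) (b := π) (C := exp t)
    (f := fun θ ↦ cos θ ^ j * exp (t * cos θ)) fun θ _ ↦
      (norm_cos_pow_mul_exp_le j t θ).trans_eq (by rw [abs_of_nonneg ht])
  rwa [sub_zero, abs_of_pos pi_pos, mul_comm] at h

lemma I0_le_exp {t : ℝ} (ht : 0 ≤ t) : I0 t ≤ exp t := by
  rw [I0_eq_cosLaplace, one_div, inv_mul_le_iff₀ pi_pos]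
  exact (le_abs_self _).trans (abs_cosLaplace_le 0 ht)

lemma hasDecay_K0 : HasDecay K0 (1 / 8) (5 / 8) := by
  refine ⟨fun t ht ↦ (hasDerivAt_K0 ht).continuousAt.continuousWithinAt, 16, fun t ht ↦ ?_⟩
  have h := pow_mul_coshLaplace_le 0 ht
  rw [abs_of_nonneg (K0_nonneg t), ← coshLaplace_zero]
  simpa using h

lemma hasDecay_thetaK0 : HasDecay thetaK0 (1 / 8) (5 / 8) := by
  refine ⟨fun t ht ↦ (hasDerivAt_thetaK0 ht).continuousAt.continuousWithinAt, 128, fun t ht ↦ ?_⟩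
  have hnonneg : 0 ≤ coshLaplace 1 t := integral_nonneg (cosh_pow_mul_exp_nonneg 1 t)
  rw [thetaK0, abs_neg, abs_of_nonneg (mul_nonneg (le_of_lt ht) hnonneg)]
  have h := pow_mul_coshLaplace_le 1 ht
  norm_num at h ⊢
  exact h

lemma hasDecay_I0 : HasDecay I0 0 (-1) := by
  refine ⟨fun t ht ↦ (hasDerivAt_I0 ht).continuousAt.continuousWithinAt, 1, fun t ht ↦ ?_⟩
  rw [abs_of_nonneg (I0_nonneg t), neg_zero, rpow_zero, one_mul, neg_neg, one_mul, one_mul]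
  exact I0_le_exp (le_of_lt ht)

lemma hasDecay_thetaI0 : HasDecay thetaI0 (-1) (-1) := by
  refine ⟨fun t _ ↦ (hasDerivAt_thetaI0 t).continuousAt.continuousWithinAt, 1,
    fun t (ht : 0 < t) ↦ ?_⟩
  rw [neg_neg, rpow_one, one_mul, one_mul, thetaI0, abs_mul, abs_mul, abs_of_pos ht,
    abs_of_pos (by positivity), one_div, inv_mul_le_iff₀ pi_pos, mul_left_comm]
  exact mul_le_mul_of_nonneg_left (abs_cosLaplace_le 1 ht.le) ht.le

/-! ### Elimination in the fourth symmetric power of the Bessel equation -/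

/-- The coefficients of `(f + f' X) (g + g' X) ^ 3`. When `f' = θ f`, `g' = θ g` for a derivation
`θ` and `f`, `g` solve Bessel's equation `θ² y = x y`, they span the system satisfied by
`f g ^ 3`. -/
def quarticForm {R : Type*} [Semiring R] (f f' g g' : R) : ℕ → R
  | 0 => f * g ^ 3
  | 1 => f' * g ^ 3 + 3 * (f * (g ^ 2 * g'))
  | 2 => 3 * (f' * (g ^ 2 * g') + f * (g * g' ^ 2))
  | 3 => 3 * (f' * (g * g' ^ 2)) + f * g' ^ 3
  | 4 => f' * g' ^ 3
  | _ => 0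

/-- The relations between consecutive levels `a`, `b` of a sequence of solutions of the quartic
Bessel system: `θ` acts on level `a` as the scalar `p`, and multiplication by `x` turns `b`
into `a`. -/
def IsQuarticStep {R : Type*} [CommRing R] (p : R) (a b : ℕ → R) : Prop :=
  p * a 0 = a 1 ∧ ∀ j < 4, p * a (j + 1) = (j + 2) * a (j + 2) + (4 - j) * b j

namespace IsQuarticStep

variable {R : Type*} [CommRing R] {p q r : R} {a b c : ℕ → R}

lemma six_mul_three (hb : IsQuarticStep q b c) (hc : r * c 0 = c 1) :
    6 * b 3 = q ^ 3 * b 0 - (4 * q + 6 * r) * c 0 := by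
  have h1 := hb.2 0 (by norm_num)
  have h2 := hb.2 1 (by norm_num)
  norm_num at h1 h2
  linear_combination -2 * h2 - q * h1 - q ^ 2 * hb.1 + 6 * hc

lemma three_term_recurrence (ha : IsQuarticStep p a b) (ha5 : a 5 = 0) (hb : IsQuarticStep q b c)
    (hc : r * c 0 = c 1) :
    p ^ 5 * a 0 = (4 * p ^ 3 + 6 * p ^ 2 * q + 6 * p * q ^ 2 + 4 * q ^ 3) * b 0
      - (24 * p + 16 * q + 24 * r) * c 0 := by
  have h1 := ha.2 0 (by norm_num)
  have h2 := ha.2 1 (by norm_num)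
  have h3 := ha.2 2 (by norm_num)
  have h4 := ha.2 3 (by norm_num)
  have hb1 := hb.2 0 (by norm_num)
  norm_num at h1 h2 h3 h4 hb1
  rw [ha5] at h4
  linear_combination p ^ 4 * ha.1 + p ^ 3 * h1 + 2 * p ^ 2 * h2 + 6 * p * h3 + 24 * h4
    + 4 * hb.six_mul_three hc - 6 * p * hb1 - (6 * p ^ 2 + 6 * p * q) * hb.1

end IsQuarticStep

/-! ### The moments of `I₀ K₀³` -/

/-- The quartic Bessel system generated by `I₀ K₀³`. -/
noncomputable def besselQuartic (j : ℕ) (t : ℝ) : ℝ :=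
  quarticForm (I0 t) (thetaI0 t) (K0 t) (thetaK0 t) j

/-- The Mellin moment `∫₀^∞ t^k E_j(t) dt` of the `j`-th member of the quartic Bessel system. -/
noncomputable def quarticMoment (k j : ℕ) : ℝ := ∫ t in Ioi (0 : ℝ), t ^ k * besselQuartic j t

lemma hasDecay_quarticForm {f f' g g' : ℝ → ℝ} {a b c d : ℝ} (hf : HasDecay f a b)
    (hf' : HasDecay f' a b) (hg : HasDecay g c d) (hg' : HasDecay g' c d) (j : ℕ) :
    HasDecay (fun t ↦ quarticForm (f t) (f' t) (g t) (g' t) j) (a + 3 * c) (b + 3 * d) := by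
  have hg3 : HasDecay (fun t ↦ g t ^ 3) (3 * c) (3 * d) := mod_cast hg.pow 3
  have hg'3 : HasDecay (fun t ↦ g' t ^ 3) (3 * c) (3 * d) := mod_cast hg'.pow 3
  have hg2g' : HasDecay (fun t ↦ g t ^ 2 * g' t) (3 * c) (3 * d) := by
    convert (hg.pow 2).mul hg' using 1 <;> push_cast <;> ring
  have hgg'2 : HasDecay (fun t ↦ g t * g' t ^ 2) (3 * c) (3 * d) := by
    convert hg.mul (hg'.pow 2) using 1 <;> push_cast <;> ring
  match j with
  | 0 => exact hf.mul hg3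
  | 1 => exact (hf'.mul hg3).add ((hf.mul hg2g').const_mul 3)
  | 2 => exact ((hf'.mul hg2g').add (hf.mul hgg'2)).const_mul 3
  | 3 => exact ((hf'.mul hgg'2).const_mul 3).add (hf.mul hg'3)
  | 4 => exact hf'.mul hg'3
  | n + 5 => simpa [quarticForm] using (hf.mul hg3).const_mul 0

lemma hasDecay_besselQuartic (j : ℕ) : HasDecay (besselQuartic j) (3 / 8) (3 / 4) := by
  have hI : HasDecay I0 0 (-9 / 8) := hasDecay_I0.mono_exp (by norm_num)
  have hI' : HasDecay thetaI0 0 (-9 / 8) := by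
    convert hasDecay_thetaI0.add_one_sub (by norm_num : (0 : ℝ) < 1 / 8) using 1 <;> norm_num
  convert hasDecay_quarticForm hI hI' hasDecay_K0 hasDecay_thetaK0 j using 1
  · rfl
  all_goals norm_num

lemma integrableOn_pow_mul_besselQuartic (k j : ℕ) :
    IntegrableOn (fun t ↦ t ^ k * besselQuartic j t) (Ioi 0) := by
  refine ((HasDecay.pow_id k).mul (hasDecay_besselQuartic j)).integrableOn ?_ (by norm_num)
  linarith [show (0 : ℝ) ≤ k from k.cast_nonneg]

lemma hasDerivAt_besselQuartic_zero {t : ℝ} (ht : 0 < t) :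
    HasDerivAt (besselQuartic 0) (besselQuartic 1 t / t) t := by
  refine ((hasDerivAt_I0 ht).mul ((hasDerivAt_K0 ht).pow 3)).congr_deriv ?_
  simp only [besselQuartic, quarticForm]
  field_simp
  norm_num
  ring

lemma hasDerivAt_besselQuartic_succ {j : ℕ} (hj : j < 4) {t : ℝ} (ht : 0 < t) :
    HasDerivAt (besselQuartic (j + 1))
      (((j + 2) * besselQuartic (j + 2) t + (4 - j) * (t ^ 2 * besselQuartic j t)) / t) t := by
  have hI := hasDerivAt_I0 ht
  have hK := hasDerivAt_K0 ht
  have hI' := hasDerivAt_thetaI0 t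
  have hK' := hasDerivAt_thetaK0 ht
  have hK2K' := (hK.pow 2).mul hK'
  have hKK'2 := hK.mul (hK'.pow 2)
  interval_cases j
  · refine ((hI'.mul (hK.pow 3)).add ((hI.mul hK2K').const_mul 3)).congr_deriv ?_
    simp only [besselQuartic, quarticForm, Pi.mul_apply, Pi.pow_apply]
    field_simp
    norm_num
    ring
  · refine (((hI'.mul hK2K').add (hI.mul hKK'2)).const_mul 3).congr_deriv ?_
    simp only [besselQuartic, quarticForm, Pi.mul_apply, Pi.pow_apply]
    field_simp
    norm_num
    ring
  · refine (((hI'.mul hKK'2).const_mul 3).add (hI.mul (hK'.pow 3))).congr_deriv ?_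
    simp only [besselQuartic, quarticForm, Pi.mul_apply, Pi.pow_apply]
    field_simp
    norm_num
    ring
  · refine (hI'.mul (hK'.pow 3)).congr_deriv ?_
    simp only [besselQuartic, quarticForm]
    field_simp
    norm_num
    ring

lemma quarticMoment_by_parts (k : ℕ) {j : ℕ} {g : ℝ → ℝ}
    (hderiv : ∀ t > 0, HasDerivAt (besselQuartic j) (g t / t) t)
    (hg : IntegrableOn (fun t ↦ t ^ k * g t) (Ioi 0)) :
    -(k + 1) * quarticMoment k j = ∫ t in Ioi (0 : ℝ), t ^ k * g t := by
  have hint := integrableOn_pow_mul_besselQuartic k j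
  have hzero : ∫ t in Ioi (0 : ℝ), ((k + 1) * (t ^ k * besselQuartic j t) + t ^ k * g t) = 0 := by
    refine ((HasDecay.pow_id (k + 1)).mul (hasDecay_besselQuartic j)).integral_deriv_eq_zero
      ?_ (by norm_num) (fun t ht ↦ ?_) ((hint.const_mul _).add hg)
    · push_cast
      linarith [show (0 : ℝ) ≤ k from k.cast_nonneg]
    · refine ((hasDerivAt_pow (k + 1) t).mul (hderiv t ht)).congr_deriv ?_
      have ht' : t ≠ 0 := ne_of_gt ht
      push_cast
      field_simp
      ring
  rw [integral_add (hint.const_mul _) hg, integral_const_mul] at hzero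
  rw [quarticMoment]
  linarith

lemma isQuarticStep_quarticMoment (k : ℕ) :
    IsQuarticStep (-(k + 1 : ℝ)) (quarticMoment k) (quarticMoment (k + 2)) := by
  refine ⟨quarticMoment_by_parts k (fun t ↦ hasDerivAt_besselQuartic_zero)
    (integrableOn_pow_mul_besselQuartic k 1), fun j hj ↦ ?_⟩
  have hsplit (t : ℝ) : t ^ k * ((j + 2) * besselQuartic (j + 2) t +
      (4 - j) * (t ^ 2 * besselQuartic j t)) = (j + 2) * (t ^ k * besselQuartic (j + 2) t) +
      (4 - j) * (t ^ (k + 2) * besselQuartic j t) := by ring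
  have hint₁ := (integrableOn_pow_mul_besselQuartic k (j + 2)).const_mul (j + 2 : ℝ)
  have hint₂ := (integrableOn_pow_mul_besselQuartic (k + 2) j).const_mul (4 - j : ℝ)
  rw [quarticMoment_by_parts k (fun t ↦ hasDerivAt_besselQuartic_succ hj)
    ((hint₁.add hint₂).congr (Eventually.of_forall fun t ↦ (hsplit t).symm))]
  simp_rw [hsplit]
  rw [integral_add hint₁ hint₂, integral_const_mul, integral_const_mul]
  rfl

/-- `t E₃` is the derivative of `E₄`, which vanishes at both ends because `θ I₀ = O(t)`. -/
lemma quarticMoment_one_three : quarticMoment 1 3 = 0 := by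
  have hdecay : HasDecay (besselQuartic 4) (-5 / 8) (7 / 8) := by
    convert hasDecay_thetaI0.mul (hasDecay_thetaK0.pow 3) using 1
    · rfl
    all_goals norm_num
  refine hdecay.integral_deriv_eq_zero (by norm_num) (by norm_num) (fun t ht ↦ ?_)
    (integrableOn_pow_mul_besselQuartic 1 3)
  refine (hasDerivAt_besselQuartic_succ (j := 3) (by norm_num) ht).congr_deriv ?_
  have ht' : t ≠ 0 := ne_of_gt ht
  simp only [besselQuartic, quarticForm]
  field_simp
  norm_num

lemma quarticMoment_three_zero : 4 * quarticMoment 3 0 = quarticMoment 1 0 := by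
  have h := (isQuarticStep_quarticMoment 1).six_mul_three (isQuarticStep_quarticMoment 3).1
  rw [quarticMoment_one_three] at h
  norm_num at h
  linarith

/-- The power series `∑ yⁿ / n!²`, for which `I₀(t) = S(t² / 4)`. -/
noncomputable def besselSeries : PowerSeries ℝ := PowerSeries.mk fun n ↦ 1 / (n.factorial : ℝ) ^ 2

/-- The Euler derivation `y d/dy` on formal power series. -/
noncomputable def eulerDerivation : Derivation ℝ (PowerSeries ℝ) (PowerSeries ℝ) :=
  (PowerSeries.X : PowerSeries ℝ) • PowerSeries.derivative ℝ

lemma coeff_eulerDerivation (n : ℕ) (f : PowerSeries ℝ) :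
    PowerSeries.coeff n (eulerDerivation f) = n * PowerSeries.coeff n f := by
  cases n with
  | zero => simp [eulerDerivation]
  | succ n =>
    rw [eulerDerivation, Derivation.smul_apply, smul_eq_mul, PowerSeries.coeff_succ_X_mul,
      PowerSeries.coeff_derivative]
    push_cast
    ring

lemma eulerDerivation_eulerDerivation_besselSeries :
    eulerDerivation (eulerDerivation besselSeries) = PowerSeries.X * besselSeries := by
  ext n
  rw [coeff_eulerDerivation, coeff_eulerDerivation]
  cases n with
  | zero => simp
  | succ n =>
    rw [PowerSeries.coeff_succ_X_mul]
    simp only [besselSeries, PowerSeries.coeff_mk, Nat.factorial_succ]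
    push_cast
    field_simp

lemma derivation_quarticForm_zero {A R : Type*} [CommRing A] [CommRing R] [Algebra A R]
    (D : Derivation A R R) (f g : R) :
    D (quarticForm f (D f) g (D g) 0) = quarticForm f (D f) g (D g) 1 := by
  simp only [quarticForm, Derivation.leibniz, Derivation.leibniz_pow, smul_eq_mul, nsmul_eq_mul]
  push_cast
  ring

lemma derivation_quarticForm_succ {A R : Type*} [CommRing A] [CommRing R] [Algebra A R]
    (D : Derivation A R R) {f g x : R} (hf : D (D f) = x * f) (hg : D (D g) = x * g) {j : ℕ}
    (hj : j < 4) :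
    D (quarticForm f (D f) g (D g) (j + 1)) =
      (j + 2) * quarticForm f (D f) g (D g) (j + 2) +
        (4 - j) * (x * quarticForm f (D f) g (D g) j) := by
  have h3 : D 3 = 0 := mod_cast D.map_natCast 3
  interval_cases j
  all_goals
    simp only [quarticForm, map_add, Derivation.leibniz, Derivation.leibniz_pow, smul_eq_mul,
      nsmul_eq_mul, hf, hg, h3]
    push_cast
    ring

/-- The `n`-th coefficients of the quartic system generated by `besselSeries ^ 4`. -/
noncomputable def quarticCoeff (n j : ℕ) : ℝ :=
  PowerSeries.coeff n (quarticForm besselSeries (eulerDerivation besselSeries) besselSeries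
    (eulerDerivation besselSeries) j)

lemma quarticCoeff_zero_right (n : ℕ) :
    quarticCoeff n 0 = PowerSeries.coeff n (besselSeries ^ 4) := by
  rw [quarticCoeff, quarticForm, ← pow_succ']

lemma mul_quarticCoeff_zero (n : ℕ) : n * quarticCoeff n 0 = quarticCoeff n 1 := by
  rw [quarticCoeff, ← coeff_eulerDerivation, derivation_quarticForm_zero, quarticCoeff]

lemma isQuarticStep_quarticCoeff (n : ℕ) :
    IsQuarticStep (n + 1 : ℝ) (quarticCoeff (n + 1)) (quarticCoeff n) := by
  refine ⟨mod_cast mul_quarticCoeff_zero (n + 1), fun j hj ↦ ?_⟩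
  have hS := eulerDerivation_eulerDerivation_besselSeries
  have hj2 : (j + 2 : PowerSeries ℝ) = PowerSeries.C (j + 2 : ℝ) := by
    rw [map_add, map_natCast, map_ofNat]
  have hj4 : (4 - j : PowerSeries ℝ) = PowerSeries.C (4 - j : ℝ) := by
    rw [map_sub, map_natCast, map_ofNat]
  have h := congrArg (PowerSeries.coeff (n + 1))
    (derivation_quarticForm_succ eulerDerivation hS hS hj)
  rw [coeff_eulerDerivation, hj2, hj4, map_add, PowerSeries.coeff_C_mul, PowerSeries.coeff_C_mul,
    PowerSeries.coeff_succ_X_mul] at h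
  exact_mod_cast h

lemma quarticCoeff_zero_zero : quarticCoeff 0 0 = 1 := by
  rw [quarticCoeff_zero_right, PowerSeries.coeff_zero_eq_constantCoeff, map_pow]
  simp [besselSeries]

lemma quarticCoeff_one_zero : quarticCoeff 1 0 = 4 := by
  rw [quarticCoeff_zero_right, PowerSeries.coeff_one_pow]
  simp [besselSeries]

/-- Both sides satisfy the same three-term recurrence, by the common elimination. -/
lemma quarticMoment_eq (n : ℕ) :
    quarticMoment (2 * n + 1) 0 =
      quarticMoment 1 0 * n.factorial ^ 4 * quarticCoeff n 0 / 16 ^ n := by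
  induction n using Nat.twoStepInduction with
  | zero => simp [quarticCoeff_zero_zero]
  | one =>
    have h := quarticMoment_three_zero
    norm_num [quarticCoeff_one_zero]
    linarith
  | more n ih₀ ih₁ =>
    have hmoment := (isQuarticStep_quarticMoment (2 * n + 1)).three_term_recurrence
      (by simp [quarticMoment, besselQuartic, quarticForm])
      (isQuarticStep_quarticMoment (2 * (n + 1) + 1)) (isQuarticStep_quarticMoment
        (2 * (n + 2) + 1)).1
    have hcoeff := (isQuarticStep_quarticCoeff (n + 1)).three_term_recurrence
      (by simp [quarticCoeff, quarticForm]) (isQuarticStep_quarticCoeff n) (mul_quarticCoeff_zero n)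
    change _ = _ * quarticMoment (2 * (n + 1) + 1) 0 - _ * quarticMoment (2 * (n + 2) + 1) 0
      at hmoment
    rw [ih₀, ih₁] at hmoment
    simp only [Nat.factorial_succ, pow_succ (16 : ℝ)] at hmoment ⊢
    push_cast at hmoment hcoeff ⊢
    have hzero : 128 * ((n : ℝ) + 2) * (quarticMoment (2 * (n + 2) + 1) 0 -
        quarticMoment 1 0 * ((n + 1 + 1) * ((n + 1) * n.factorial)) ^ 4 *
          quarticCoeff (n + 2) 0 / (16 ^ n * 16 * 16)) = 0 := by
      linear_combination -hmoment -
        quarticMoment 1 0 * ((n + 1) * n.factorial) ^ 4 / 16 ^ n / 2 * hcoeff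
    have h := (mul_eq_zero.1 hzero).resolve_left (by positivity)
    linarith

/-! ### Power series expansions against moments -/

lemma integral_cos_pow_two_mul_add_one (n : ℕ) : ∫ θ in (0 : ℝ)..π, cos θ ^ (2 * n + 1) = 0 := by
  induction n with
  | zero => simp
  | succ n ih => rw [show 2 * (n + 1) + 1 = 2 * n + 1 + 2 by ring, integral_cos_pow, ih]; simp

lemma integral_cos_pow_two_mul (n : ℕ) :
    ∫ θ in (0 : ℝ)..π, cos θ ^ (2 * n) =
      π * (2 * n).factorial / (4 ^ n * (n.factorial : ℝ) ^ 2) := by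
  induction n with
  | zero => simp
  | succ n ih =>
    rw [show 2 * (n + 1) = 2 * n + 2 by ring, integral_cos_pow, ih, Nat.factorial_succ (2 * n + 1),
      Nat.factorial_succ (2 * n), Nat.factorial_succ n]
    simp only [sin_pi, sin_zero, mul_zero, sub_zero, zero_div, zero_add]
    push_cast
    field_simp
    ring

lemma hasSum_pow_div_factorial_mul_integral_cos_pow (t : ℝ) :
    HasSum (fun m : ℕ ↦ t ^ m / m.factorial * ∫ θ in (0 : ℝ)..π, cos θ ^ m)
      (∫ θ in (0 : ℝ)..π, exp (t * cos θ)) := by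
  have hexp (x : ℝ) : HasSum (fun n : ℕ ↦ x ^ n / (n.factorial : ℝ)) (exp x) := by
    rw [Real.exp_eq_exp_ℝ]; exact NormedSpace.expSeries_div_hasSum_exp x
  have hint : HasSum (fun m : ℕ ↦ ∫ θ in (0 : ℝ)..π, (t * cos θ) ^ m / (m.factorial : ℝ))
      (∫ θ in (0 : ℝ)..π, exp (t * cos θ)) := by
    refine intervalIntegral.hasSum_integral_of_dominated_convergence
      (fun m _ ↦ |t| ^ m / m.factorial) (fun m ↦ Continuous.aestronglyMeasurable (by fun_prop))
      (fun m ↦ .of_forall fun θ _ ↦ ?_) (.of_forall fun _ _ ↦ (hexp |t|).summable)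
      intervalIntegrable_const (.of_forall fun _ _ ↦ hexp _)
    rw [norm_div, norm_pow, norm_mul, Real.norm_eq_abs, Real.norm_eq_abs,
      Real.norm_of_nonneg (by positivity : (0 : ℝ) ≤ m.factorial)]
    gcongr
    exact mul_le_of_le_one_right (abs_nonneg _) (abs_cos_le_one θ)
  convert hint using 2 with m
  rw [← intervalIntegral.integral_const_mul]
  exact intervalIntegral.integral_congr fun θ _ ↦ by ring

lemma hasSum_I0 (t : ℝ) :
    HasSum (fun n ↦ PowerSeries.coeff n besselSeries * (t ^ 2 / 4) ^ n) (I0 t) := by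
  have hall := (hasSum_pow_div_factorial_mul_integral_cos_pow t).mul_left (1 / π)
  have hinj : Function.Injective fun n : ℕ ↦ 2 * n := fun a b h ↦ by simpa using h
  have heven := (hinj.hasSum_iff (a := I0 t) fun m hm ↦ ?_).2 hall
  · convert heven using 2 with n
    simp only [Function.comp, integral_cos_pow_two_mul, besselSeries, PowerSeries.coeff_mk]
    have := pi_ne_zero
    rw [div_pow, pow_mul]
    field_simp
  · obtain ⟨k, rfl⟩ : Odd m := Nat.not_even_iff_odd.1 fun ⟨k, hk⟩ ↦ hm ⟨k, by grind⟩
    rw [integral_cos_pow_two_mul_add_one, mul_zero, mul_zero]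

/-- `f` has nonnegative coefficients and sums to `a` at `y`. -/
def HasNonnegSum (f : PowerSeries ℝ) (y a : ℝ) : Prop :=
  (∀ n, 0 ≤ PowerSeries.coeff n f) ∧ HasSum (fun n ↦ PowerSeries.coeff n f * y ^ n) a

namespace HasNonnegSum

variable {f g : PowerSeries ℝ} {y a b : ℝ}

lemma mul (hf : HasNonnegSum f y a) (hg : HasNonnegSum g y b) :
    HasNonnegSum (f * g) y (a * b) := by
  refine ⟨fun n ↦ ?_, ?_⟩
  · rw [PowerSeries.coeff_mul]
    exact Finset.sum_nonneg fun p _ ↦ mul_nonneg (hf.1 _) (hg.1 _)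
  · have hfn := hf.2.summable.norm
    have hgn := hg.2.summable.norm
    have hsum := (summable_norm_sum_mul_antidiagonal_of_summable_norm hfn hgn).of_norm.hasSum
    rw [← tsum_mul_tsum_eq_tsum_sum_antidiagonal_of_summable_norm hfn hgn, hf.2.tsum_eq,
      hg.2.tsum_eq] at hsum
    refine hsum.congr_fun fun n ↦ ?_
    rw [PowerSeries.coeff_mul, Finset.sum_mul]
    refine Finset.sum_congr rfl fun p hp ↦ ?_
    rw [← Finset.HasAntidiagonal.mem_antidiagonal.1 hp, pow_add]
    ring

lemma pow (hf : HasNonnegSum f y a) (k : ℕ) : HasNonnegSum (f ^ k) y (a ^ k) := by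
  induction k with
  | zero =>
    refine ⟨fun n ↦ ?_, ?_⟩
    · rw [pow_zero, PowerSeries.coeff_one]; split_ifs <;> norm_num
    · convert hasSum_ite_eq (0 : ℕ) (1 : ℝ) using 2 with n
      · rw [pow_zero, PowerSeries.coeff_one]; split_ifs with h <;> simp [h]
      · simp
  | succ k ih => simpa only [pow_succ] using ih.mul hf

end HasNonnegSum

lemma hasNonnegSum_besselSeries (t : ℝ) : HasNonnegSum besselSeries (t ^ 2 / 4) (I0 t) :=
  ⟨fun n ↦ by rw [besselSeries, PowerSeries.coeff_mk]; positivity, hasSum_I0 t⟩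

lemma coeff_besselSeries_sq (n : ℕ) :
    PowerSeries.coeff n (besselSeries ^ 2) = (2 * n).factorial / (n.factorial : ℝ) ^ 4 := by
  have hchoose : ∑ i ∈ Finset.range (n + 1), (n.choose i : ℝ) ^ 2 =
      (2 * n).factorial / (n.factorial * n.factorial) := by
    have h := Nat.cast_choose ℝ (by omega : n ≤ 2 * n)
    rw [show 2 * n - n = n by omega, ← Nat.sum_range_choose_sq] at h
    exact_mod_cast h
  rw [sq, PowerSeries.coeff_mul, Finset.Nat.sum_antidiagonal_eq_sum_range_succ_mk]
  calc _ = ∑ i ∈ Finset.range (n + 1), (n.choose i : ℝ) ^ 2 / (n.factorial : ℝ) ^ 2 := by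
        refine Finset.sum_congr rfl fun i hi ↦ ?_
        rw [Nat.cast_choose ℝ (Nat.lt_succ_iff.1 (Finset.mem_range.1 hi))]
        simp only [besselSeries, PowerSeries.coeff_mk]
        field_simp
    _ = _ := by rw [← Finset.sum_div, hchoose]; field_simp

lemma setLIntegral_mul_eq_tsum_of_hasNonnegSum {f : PowerSeries ℝ} {F w : ℝ → ℝ}
    (hF : ∀ t, HasNonnegSum f (t ^ 2 / 4) (F t)) (hw : ∀ t, 0 < t → 0 ≤ w t)
    (hint : ∀ n : ℕ, IntegrableOn (fun t ↦ t ^ (2 * n) * w t) (Ioi 0)) :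
    ∫⁻ t in Ioi (0 : ℝ), ENNReal.ofReal (F t * w t) =
      ∑' n, ENNReal.ofReal
        (PowerSeries.coeff n f / 4 ^ n * ∫ t in Ioi (0 : ℝ), t ^ (2 * n) * w t) := by
  have hterm (n : ℕ) {t : ℝ} (ht : 0 < t) :
      0 ≤ PowerSeries.coeff n f / 4 ^ n * (t ^ (2 * n) * w t) :=
    mul_nonneg (div_nonneg ((hF 0).1 n) (by positivity)) (mul_nonneg (by positivity) (hw t ht))
  have hexpand {t : ℝ} (ht : 0 < t) : ENNReal.ofReal (F t * w t) =
      ∑' n, ENNReal.ofReal (PowerSeries.coeff n f / 4 ^ n * (t ^ (2 * n) * w t)) := by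
    have hsum : HasSum (fun n ↦ PowerSeries.coeff n f / 4 ^ n * (t ^ (2 * n) * w t))
        (F t * w t) := by
      refine ((hF t).2.mul_right (w t)).congr_fun fun n ↦ ?_
      rw [div_pow, pow_mul]; ring
    rw [← hsum.tsum_eq, ENNReal.ofReal_tsum_of_nonneg (hterm · ht) hsum.summable]
  rw [setLIntegral_congr_fun measurableSet_Ioi fun t ht ↦ hexpand ht, lintegral_tsum fun n ↦
    ((hint n).const_mul _).aestronglyMeasurable.aemeasurable.ennreal_ofReal]
  congr 1 with n
  rw [← integral_const_mul, ofReal_integral_eq_lintegral_ofReal ((hint n).const_mul _)]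
  exact (ae_restrict_iff' measurableSet_Ioi).2 (.of_forall fun t ht ↦ hterm n ht)

lemma continuous_I0 : Continuous I0 := by
  rw [funext I0_eq_cosLaplace]
  exact continuous_const.mul
    (continuous_iff_continuousAt.2 fun t ↦ (hasDerivAt_cosLaplace 0 t).continuousAt)

lemma continuousOn_K0 : ContinuousOn K0 (Ioi 0) := hasDecay_K0.1

lemma integral_pow_mul_exp_neg_mul (n : ℕ) {r : ℝ} (hr : 0 < r) :
    ∫ t in Ioi (0 : ℝ), t ^ n * exp (-(r * t)) = n.factorial / r ^ (n + 1) := by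
  have h := Real.integral_rpow_mul_exp_neg_mul_Ioi (a := (n : ℝ) + 1) (by positivity) hr
  simp only [Real.Gamma_nat_eq_factorial, add_sub_cancel_right, Real.rpow_natCast] at h
  rw [h, ← Nat.cast_add_one, Real.rpow_natCast, one_div, inv_pow, mul_comm, div_eq_mul_inv]

lemma setIntegral_Ioi_eq_toReal {F : ℝ → ℝ} (hF : ContinuousOn F (Ioi 0))
    (hnonneg : ∀ t, 0 < t → 0 ≤ F t) :
    ∫ t in Ioi (0 : ℝ), F t = (∫⁻ t in Ioi (0 : ℝ), ENNReal.ofReal (F t)).toReal :=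
  integral_eq_lintegral_of_nonneg_ae
    ((ae_restrict_iff' measurableSet_Ioi).2 (.of_forall hnonneg))
    (hF.aestronglyMeasurable measurableSet_Ioi)

lemma besselQuartic_zero (t : ℝ) : besselQuartic 0 t = I0 t * K0 t ^ 3 := rfl

lemma quarticMoment_one_zero_nonneg : 0 ≤ quarticMoment 1 0 :=
  setIntegral_nonneg measurableSet_Ioi fun t (ht : 0 < t) ↦ by
    have := I0_nonneg t
    have := K0_nonneg t
    rw [besselQuartic_zero]
    positivity

lemma coeff_sq_mul_quarticMoment_eq (n : ℕ) :
    PowerSeries.coeff n (besselSeries ^ 2) / 4 ^ n * quarticMoment (2 * n + 1) 0 =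
      4 * quarticMoment 1 0 * (PowerSeries.coeff n (besselSeries ^ 4) / 4 ^ n *
        ∫ t in Ioi (0 : ℝ), t ^ (2 * n) * exp (-(4 * t))) := by
  rw [integral_pow_mul_exp_neg_mul _ four_pos, coeff_besselSeries_sq, quarticMoment_eq,
    quarticCoeff_zero_right, pow_succ 4, pow_mul 4]
  norm_num
  field_simp

/-- Expanding `I0 ^ 2` against `I0 * K0 ^ 3` and `I0 ^ 4` against `exp (-4 t)` gives proportional
series. -/
lemma integral_I0_cube_mul_K0_cube :
    ∫ t in Ioi (0 : ℝ), I0 t ^ 3 * K0 t ^ 3 * t =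
      4 * quarticMoment 1 0 * ∫ t in Ioi (0 : ℝ), exp (-(t * 4)) * I0 t ^ 4 := by
  have hquartic := setLIntegral_mul_eq_tsum_of_hasNonnegSum
    (fun t ↦ (hasNonnegSum_besselSeries t).pow 2) (w := fun t ↦ t * besselQuartic 0 t)
    (fun t ht ↦ by
      have := I0_nonneg t
      have := K0_nonneg t
      rw [besselQuartic_zero]; positivity)
    (fun n ↦ (integrableOn_pow_mul_besselQuartic (2 * n + 1) 0).congr
      (.of_forall fun t ↦ by ring))
  have hexp := setLIntegral_mul_eq_tsum_of_hasNonnegSum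
    (fun t ↦ (hasNonnegSum_besselSeries t).pow 4) (w := fun t ↦ exp (-(4 * t)))
    (fun t _ ↦ (exp_pos _).le)
    (fun n ↦ not_imp_comm.1 integral_undef (by
      rw [integral_pow_mul_exp_neg_mul _ four_pos]; positivity))
  have hmoment (n : ℕ) : ∫ t in Ioi (0 : ℝ), t ^ (2 * n) * (t * besselQuartic 0 t) =
      quarticMoment (2 * n + 1) 0 := by
    unfold quarticMoment; congr 1 with t; ring
  have hnonneg : 0 ≤ 4 * quarticMoment 1 0 := mul_nonneg (by norm_num) quarticMoment_one_zero_nonneg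
  simp only [hmoment, coeff_sq_mul_quarticMoment_eq, ENNReal.ofReal_mul hnonneg,
    ENNReal.tsum_mul_left, ← hexp] at hquartic
  rw [setIntegral_Ioi_eq_toReal, setIntegral_Ioi_eq_toReal]
  · rw [← ENNReal.toReal_ofReal hnonneg, ← ENNReal.toReal_mul]
    convert congrArg ENNReal.toReal hquartic using 5 with t t
    · rw [besselQuartic_zero]; ring
    · ring_nf
  · have := continuous_I0; fun_prop
  · exact fun t _ ↦ mul_nonneg (exp_pos _).le (pow_nonneg (I0_nonneg t) 4)
  · exact ((continuous_I0.continuousOn.pow 3).mul (continuousOn_K0.pow 3)).mul continuousOn_id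
  · intro t ht
    have := I0_nonneg t
    have := K0_nonneg t
    positivity

/-! ### The Watson integral as a Laplace transform -/

/-- The Laplace transform of `I0 ^ k`, evaluated at `s`. -/
noncomputable def laplaceI0Pow (k : ℕ) (s : ℝ) : ℝ :=
  ∫ t in Ioi (0 : ℝ), exp (-(t * s)) * I0 t ^ k

lemma laplaceI0Pow_zero {s : ℝ} (hs : 0 < s) : laplaceI0Pow 0 s = 1 / s := by
  have h := integral_exp_mul_Ioi (a := -s) (by linarith) 0
  rw [mul_zero, Real.exp_zero, neg_div_neg_eq] at h
  rw [laplaceI0Pow, ← h]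
  congr 1 with t
  ring_nf

lemma integral_exp_neg_mul_sub_cos (k : ℕ) (t s : ℝ) :
    ∫ p in Ioc 0 π, exp (-(t * (s - cos p))) * I0 t ^ k =
      π * (exp (-(t * s)) * I0 t ^ (k + 1)) := by
  have hsplit (p : ℝ) : exp (-(t * (s - cos p))) * I0 t ^ k =
      exp (-(t * s)) * I0 t ^ k * exp (t * cos p) := by
    rw [show -(t * (s - cos p)) = -(t * s) + t * cos p by ring, Real.exp_add]; ring
  have := pi_ne_zero
  simp_rw [hsplit, integral_const_mul, ← intervalIntegral.integral_of_le pi_pos.le, pow_succ]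
  nth_rw 3 [I0]
  field_simp

lemma integral_laplaceI0Pow_sub_cos {k : ℕ} {s : ℝ}
    (hint : IntegrableOn (fun t ↦ exp (-(t * s)) * I0 t ^ (k + 1)) (Ioi 0)) :
    ∫ p in (0 : ℝ)..π, laplaceI0Pow k (s - cos p) = π * laplaceI0Pow (k + 1) s := by
  have hI0 := continuous_I0
  simp only [laplaceI0Pow]
  rw [intervalIntegral.integral_of_le pi_pos.le, integral_integral_swap]
  · simp_rw [integral_exp_neg_mul_sub_cos, integral_const_mul]
  · refine (integrable_prod_iff' (Continuous.aestronglyMeasurable (by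
      simp only [Function.uncurry_def]; fun_prop))).2 ⟨.of_forall fun t ↦ ?_, ?_⟩
    · exact ((by fun_prop : Continuous fun p ↦ exp (-(t * (s - cos p))) * I0 t ^ k).integrableOn_Icc
        (a := 0) (b := π)).mono_set Ioc_subset_Icc_self
    · refine (hint.const_mul π).congr (.of_forall fun t ↦ ?_)
      simp only
      rw [← integral_exp_neg_mul_sub_cos]
      congr 1 with p
      exact (Real.norm_of_nonneg (mul_nonneg (exp_pos _).le (pow_nonneg (I0_nonneg t) k))).symm

lemma integrableOn_exp_neg_mul_I0_pow {k : ℕ} {s : ℝ} (hs : k < s) :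
    IntegrableOn (fun t ↦ exp (-(t * s)) * I0 t ^ k) (Ioi 0) := by
  have hI0 := continuous_I0
  refine Integrable.mono' (integrableOn_exp_mul_Ioi (a := (k : ℝ) - s) (by linarith) 0)
    (Continuous.aestronglyMeasurable (by fun_prop))
    ((ae_restrict_iff' measurableSet_Ioi).2 (.of_forall fun t (ht : 0 < t) ↦ ?_))
  have hpos := I0_nonneg t
  rw [Real.norm_of_nonneg (by positivity)]
  calc exp (-(t * s)) * I0 t ^ k ≤ exp (-(t * s)) * exp t ^ k := by
        gcongr; exact I0_le_exp ht.le
    _ = _ := by rw [← Real.exp_nat_mul, ← Real.exp_add]; ring_nf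

lemma I0_le_exp_mul_div_sqrt {t : ℝ} (ht : 0 < t) : I0 t ≤ exp t * (π / sqrt t) := by
  have hrate : 0 < 2 * t / π ^ 2 := by positivity
  have hgauss : ∫ θ in (0 : ℝ)..π, exp (t * cos θ) ≤
      ∫ θ in (0 : ℝ)..π, exp t * exp (-(2 * t / π ^ 2) * θ ^ 2) := by
    refine intervalIntegral.integral_mono_on pi_pos.le (Continuous.intervalIntegrable (by fun_prop)
      _ _) (Continuous.intervalIntegrable (by fun_prop) _ _) fun θ hθ ↦ ?_
    rw [← Real.exp_add, Real.exp_le_exp]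
    calc t * cos θ ≤ t * (1 - 2 / π ^ 2 * θ ^ 2) := by
          gcongr
          exact Real.cos_le_one_sub_mul_cos_sq (by rw [abs_of_nonneg hθ.1]; exact hθ.2)
      _ = _ := by ring
  have hhalf : ∫ θ in (0 : ℝ)..π, exp (-(2 * t / π ^ 2) * θ ^ 2) ≤ π ^ 2 / sqrt t := by
    rw [intervalIntegral.integral_of_le pi_pos.le]
    calc ∫ θ in Ioc (0 : ℝ) π, exp (-(2 * t / π ^ 2) * θ ^ 2)
        ≤ ∫ θ in Ioi (0 : ℝ), exp (-(2 * t / π ^ 2) * θ ^ 2) :=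
          setIntegral_mono_set (integrable_exp_neg_mul_sq hrate).integrableOn
            (.of_forall fun θ ↦ (exp_pos _).le) Ioc_subset_Ioi_self.eventuallyLE
      _ = sqrt (π / (2 * t / π ^ 2)) / 2 := integral_gaussian_Ioi _
      _ ≤ sqrt (π / (2 * t / π ^ 2)) := half_le_self (sqrt_nonneg _)
      _ ≤ sqrt ((π ^ 2) ^ 2 / t) := by
          apply Real.sqrt_le_sqrt
          rw [div_div_eq_mul_div, div_le_div_iff₀ (by positivity) ht]
          nlinarith [Real.pi_gt_three, mul_pos (pow_pos pi_pos 3) ht]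
      _ = π ^ 2 / sqrt t := by rw [Real.sqrt_div (by positivity), Real.sqrt_sq (by positivity)]
  calc I0 t ≤ 1 / π * (exp t * (π ^ 2 / sqrt t)) := by
        rw [intervalIntegral.integral_const_mul] at hgauss
        rw [I0]
        gcongr
        exact hgauss.trans (by gcongr)
    _ = _ := by have := pi_ne_zero; field_simp

lemma integrableOn_exp_neg_four_mul_I0_pow_four :
    IntegrableOn (fun t ↦ exp (-(t * 4)) * I0 t ^ 4) (Ioi 0) := by
  have hcont : Continuous fun t ↦ exp (-(t * 4)) * I0 t ^ 4 := by
    have := continuous_I0; fun_prop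
  rw [← Ioc_union_Ioi_eq_Ioi zero_le_one]
  refine (hcont.integrableOn_Icc.mono_set Ioc_subset_Icc_self).union ?_
  have hdom := (integrableOn_Ioi_rpow_of_lt (a := -2) (c := 1) (by norm_num) one_pos).const_mul
    (π ^ 4)
  refine Integrable.mono' hdom hcont.aestronglyMeasurable
    ((ae_restrict_iff' measurableSet_Ioi).2 (.of_forall fun t (ht : 1 < t) ↦ ?_))
  have ht0 : 0 < t := one_pos.trans ht
  have hpos := I0_nonneg t
  rw [Real.norm_of_nonneg (by positivity)]
  calc _ ≤ exp (-(t * 4)) * (exp t * (π / sqrt t)) ^ 4 := by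
        gcongr; exact I0_le_exp_mul_div_sqrt ht0
    _ = (exp (-(t * 4)) * exp t ^ 4) * (π ^ 4 / (sqrt t ^ 2) ^ 2) := by ring
    _ = π ^ 4 / t ^ 2 := by
        rw [Real.sq_sqrt ht0.le, ← Real.exp_nat_mul, ← Real.exp_add]
        push_cast
        rw [show -(t * 4) + 4 * t = 0 by ring, Real.exp_zero, one_mul]
    _ = π ^ 4 * t ^ (-2 : ℝ) := by
        rw [Real.rpow_neg ht0.le, Real.rpow_two, div_eq_mul_inv]

lemma cos_lt_one_of_mem_Ioc {p : ℝ} (hp : p ∈ Ioc 0 π) : cos p < 1 := by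
  simpa using Real.cos_lt_cos_of_nonneg_of_le_pi le_rfl hp.2 hp.1

lemma integral_zero_pi_congr {f g : ℝ → ℝ} (h : ∀ p, cos p < 1 → f p = g p) :
    ∫ p in (0 : ℝ)..π, f p = ∫ p in (0 : ℝ)..π, g p := by
  refine intervalIntegral.integral_congr_ae (.of_forall fun p hp ↦ h p ?_)
  rw [uIoc_of_le pi_pos.le] at hp
  exact cos_lt_one_of_mem_Ioc hp

lemma watson_eq_laplaceI0Pow :
    1 / (4 * π ^ 4) *
      (∫ p₁ in (0 : ℝ)..π, ∫ p₂ in (0 : ℝ)..π, ∫ p₃ in (0 : ℝ)..π, ∫ p₄ in (0 : ℝ)..π,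
        1 / (1 - (1 / 4) * (cos p₁ + cos p₂ + cos p₃ + cos p₄))) = laplaceI0Pow 4 4 := by
  have hfour : ∫ p in (0 : ℝ)..π, laplaceI0Pow 3 (4 - cos p) = π * laplaceI0Pow 4 4 :=
    integral_laplaceI0Pow_sub_cos integrableOn_exp_neg_four_mul_I0_pow_four
  have hstep {k : ℕ} {s : ℝ} (hs : (k + 1 : ℕ) < s) :
      ∫ p in (0 : ℝ)..π, laplaceI0Pow k (s - cos p) = π * laplaceI0Pow (k + 1) s :=
    integral_laplaceI0Pow_sub_cos (integrableOn_exp_neg_mul_I0_pow hs)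
  suffices h : ∫ p₁ in (0 : ℝ)..π, ∫ p₂ in (0 : ℝ)..π, ∫ p₃ in (0 : ℝ)..π, ∫ p₄ in (0 : ℝ)..π,
      1 / (1 - (1 / 4) * (cos p₁ + cos p₂ + cos p₃ + cos p₄)) =
      ∫ p₁ in (0 : ℝ)..π, 4 * π ^ 3 * laplaceI0Pow 3 (4 - cos p₁) by
    have := pi_ne_zero
    rw [h, intervalIntegral.integral_const_mul, hfour]
    field_simp
  refine integral_zero_pi_congr fun p₁ h₁ ↦ ?_
  rw [show 4 * π ^ 3 * laplaceI0Pow 3 (4 - cos p₁) =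
      4 * π ^ 2 * (π * laplaceI0Pow 3 (4 - cos p₁)) by ring,
    ← hstep (by push_cast; linarith), ← intervalIntegral.integral_const_mul]
  refine integral_zero_pi_congr fun p₂ h₂ ↦ ?_
  rw [show 4 * π ^ 2 * laplaceI0Pow 2 (4 - cos p₁ - cos p₂) =
      4 * π * (π * laplaceI0Pow 2 (4 - cos p₁ - cos p₂)) by ring,
    ← hstep (by push_cast; linarith), ← intervalIntegral.integral_const_mul]
  refine integral_zero_pi_congr fun p₃ h₃ ↦ ?_
  rw [show 4 * π * laplaceI0Pow 1 (4 - cos p₁ - cos p₂ - cos p₃) =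
      4 * (π * laplaceI0Pow 1 (4 - cos p₁ - cos p₂ - cos p₃)) by ring,
    ← hstep (by push_cast; linarith), ← intervalIntegral.integral_const_mul]
  refine integral_zero_pi_congr fun p₄ h₄ ↦ ?_
  rw [laplaceI0Pow_zero (by linarith), mul_one_div, div_eq_div_iff (by linarith) (by linarith)]
  ring

/-! ### The principal inverse square root -/

/-- The principal branch of `w ^ (-1/2)`, with value `0` at `0`. -/
noncomputable def invSqrt (w : ℂ) : ℂ := w ^ (-1 / 2 : ℂ)

lemma invSqrt_of_ne_zero {w : ℂ} (hw : w ≠ 0) : invSqrt w = Complex.exp (-Complex.log w / 2) := by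
  rw [invSqrt, Complex.cpow_def_of_ne_zero hw]
  ring_nf

lemma invSqrt_zero : invSqrt 0 = 0 := Complex.zero_cpow (by norm_num)

lemma invSqrt_ofReal {x : ℝ} (hx : 0 ≤ x) : invSqrt x = ((√x)⁻¹ : ℝ) := by
  rw [invSqrt, show (-1 / 2 : ℂ) = ((-(1 / 2) : ℝ) : ℂ) by push_cast; ring,
    ← Complex.ofReal_cpow hx, Real.rpow_neg hx, Real.sqrt_eq_rpow]

lemma norm_invSqrt (w : ℂ) : ‖invSqrt w‖ = (√‖w‖)⁻¹ := by
  rw [invSqrt, show (-1 / 2 : ℂ) = ((-(1 / 2) : ℝ) : ℂ) by push_cast; ring,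
    Complex.norm_cpow_real, Real.rpow_neg (norm_nonneg w), Real.sqrt_eq_rpow]

lemma invSqrt_mul_self (w : ℂ) : invSqrt w * invSqrt w = w⁻¹ := by
  rcases eq_or_ne w 0 with rfl | hw
  · simp [invSqrt_zero]
  · rw [invSqrt, ← Complex.cpow_add _ _ hw, ← Complex.cpow_neg_one]
    norm_num

lemma invSqrt_ofReal_mul {r : ℝ} (hr : 0 < r) (w : ℂ) :
    invSqrt (r * w) = ((√r)⁻¹ : ℝ) * invSqrt w := by
  rcases eq_or_ne w 0 with rfl | hw
  · simp [invSqrt_zero]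
  · have hr' : (r : ℂ) ≠ 0 := by exact_mod_cast hr.ne'
    rw [← invSqrt_ofReal hr.le, invSqrt_of_ne_zero hw, invSqrt_of_ne_zero hr',
      invSqrt_of_ne_zero (mul_ne_zero hr' hw), Complex.log_ofReal_mul hr hw,
      Complex.ofReal_log hr.le,
      ← Complex.exp_add]
    ring_nf

/-- On the closed upper half-plane `log (-w̄) = conj (log w) + π i`. -/
lemma invSqrt_neg_conj {w : ℂ} (hw : 0 ≤ w.im) :
    invSqrt (-(starRingEnd ℂ) w) = -Complex.I * (starRingEnd ℂ) (invSqrt w) := by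
  rcases eq_or_ne w 0 with rfl | hw0
  · simp [invSqrt_zero]
  have hlog : Complex.log (-(starRingEnd ℂ) w) =
      (starRingEnd ℂ) (Complex.log w) + π * Complex.I := by
    have hexp : Complex.exp ((starRingEnd ℂ) (Complex.log w) + π * Complex.I) =
        -(starRingEnd ℂ) w := by
      rw [Complex.exp_add, Complex.exp_conj, Complex.exp_log hw0, Complex.exp_pi_mul_I, mul_neg_one]
    have him : ((starRingEnd ℂ) (Complex.log w) + π * Complex.I).im = π - w.arg := by
      simp only [Complex.add_im, Complex.conj_im, Complex.log_im, Complex.mul_im, Complex.ofReal_re,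
        Complex.I_im, Complex.ofReal_im, Complex.I_re]
      ring
    have harg := Complex.arg_nonneg_iff.2 hw
    have harg' := Complex.arg_le_pi w
    rw [← hexp, Complex.log_exp] <;> rw [him] <;> linarith [pi_pos]
  rw [invSqrt_of_ne_zero (neg_ne_zero.2 ((map_ne_zero _).2 hw0)), invSqrt_of_ne_zero hw0, hlog,
    ← Complex.exp_conj, ← Complex.exp_neg_pi_div_two_mul_I, ← Complex.exp_add]
  simp only [map_div₀, map_neg, map_ofNat]
  ring_nf

lemma continuousWithinAt_invSqrt {w : ℂ} (hw : w ≠ 0) :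
    ContinuousWithinAt invSqrt {w | 0 ≤ w.im} w := by
  by_cases hslit : w ∈ Complex.slitPlane
  · exact (continuousAt_cpow_const hslit).continuousWithinAt
  have hneg : w.re < 0 ∧ w.im = 0 := by
    simp only [Complex.mem_slitPlane_iff, not_or, not_lt, not_not] at hslit
    exact ⟨hslit.1.lt_of_ne fun h ↦ hw (Complex.ext h hslit.2), hslit.2⟩
  have hlog := Complex.continuousWithinAt_log_of_re_neg_of_im_zero hneg.1 hneg.2
  refine (hlog.neg.div_const 2).cexp.congr_of_eventuallyEq ?_ (invSqrt_of_ne_zero hw)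
  filter_upwards [mem_nhdsWithin_of_mem_nhds (isOpen_ne.mem_nhds hw)] with v hv
  exact invSqrt_of_ne_zero hv

lemma hasDerivAt_invSqrt {w : ℂ} (hw : 0 < w.im) :
    HasDerivAt invSqrt (-1 / 2 * invSqrt w * w⁻¹) w := by
  have hw0 : w ≠ 0 := fun h ↦ by simp [h] at hw
  refine ((hasDerivAt_id w).cpow_const (c := -1 / 2) (.inr hw.ne')).congr_deriv ?_
  simp only [id, Complex.cpow_sub _ _ hw0, Complex.cpow_one, invSqrt]
  ring

lemma measurable_invSqrt : Measurable invSqrt := measurable_id.pow_const _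

/-! ### Real substitutions -/

lemma image_cosh_add (δ : ℝ) : (fun u ↦ cosh u + δ) '' Ioi 0 = Ioi (1 + δ) := by
  ext σ
  simp only [mem_image, mem_Ioi]
  constructor
  · rintro ⟨u, hu, rfl⟩
    linarith [Real.one_lt_cosh.2 hu.ne']
  · intro hσ
    refine ⟨arcosh (σ - δ), Real.arcosh_pos (by linarith), ?_⟩
    rw [Real.cosh_arcosh (by linarith)]
    ring

lemma image_one_sub_cos : (fun θ ↦ 1 - cos θ) '' Ioo 0 π = Ioo 0 2 := by
  ext σ
  simp only [mem_image, mem_Ioo]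
  constructor
  · rintro ⟨θ, hθ, rfl⟩
    have h0 := Real.cos_lt_cos_of_nonneg_of_le_pi le_rfl hθ.2.le hθ.1
    have hπ := Real.cos_lt_cos_of_nonneg_of_le_pi hθ.1.le le_rfl hθ.2
    rw [cos_zero] at h0
    rw [cos_pi] at hπ
    constructor <;> linarith
  · intro hσ
    refine ⟨arccos (1 - σ),
      ⟨Real.arccos_pos.2 (by linarith), Real.arccos_lt_pi.2 (by linarith)⟩, ?_⟩
    rw [Real.cos_arccos (by linarith) (by linarith)]
    ring

lemma mul_inv_sqrt_mul_inv_sqrt {a b d : ℝ} (ha : 0 ≤ a) (hd : 0 < d) (h : a * b = d ^ 2) :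
    d * ((√a)⁻¹ * (√b)⁻¹) = 1 := by
  rw [← mul_inv, ← Real.sqrt_mul ha, h, Real.sqrt_sq hd.le, mul_inv_cancel₀ hd.ne']

section CoshSubstitution

variable {δ c : ℝ}

lemma sinh_mul_kernel_cosh (hδ : |δ| = 1) {u : ℝ} (hu : u ∈ Ioi 0) :
    |sinh u| • (exp (-(c * (cosh u + δ))) * ((√(cosh u + δ))⁻¹ * (√(cosh u + δ - 2 * δ))⁻¹)) =
      exp (-(c * δ)) * exp (-(c * cosh u)) := by
  have hsinh : 0 < sinh u := Real.sinh_pos_iff.2 hu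
  have hcosh := Real.one_le_cosh u
  have hδ' : δ ^ 2 = 1 := by rw [← sq_abs, hδ, one_pow]
  have hker : sinh u * ((√(cosh u + δ))⁻¹ * (√(cosh u + δ - 2 * δ))⁻¹) = 1 :=
    mul_inv_sqrt_mul_inv_sqrt (by linarith [neg_abs_le δ]) hsinh (by
      rw [Real.sinh_sq]; linear_combination -hδ')
  rw [smul_eq_mul, abs_of_pos hsinh, mul_left_comm, hker, mul_one, ← Real.exp_add]
  ring_nf

lemma integrableOn_kernel_Ioi (hδ : |δ| = 1) (hc : 0 < c) :
    IntegrableOn (fun σ ↦ exp (-(c * σ)) * ((√σ)⁻¹ * (√(σ - 2 * δ))⁻¹)) (Ioi (1 + δ)) := by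
  rw [← image_cosh_add, integrableOn_image_iff_integrableOn_abs_deriv_smul measurableSet_Ioi
    (fun u _ ↦ ((Real.hasDerivAt_cosh u).add_const δ).hasDerivWithinAt)
    (fun _ ha _ hb h ↦ Real.cosh_injOn (Ioi_subset_Ici_self ha) (Ioi_subset_Ici_self hb)
      (add_right_cancel h)),
    integrableOn_congr_fun (fun u hu ↦ sinh_mul_kernel_cosh hδ hu) measurableSet_Ioi]
  simpa only [pow_zero, one_mul, IntegrableOn] using
    (integrableOn_cosh_pow_mul_exp 0 hc).const_mul _

lemma integral_kernel_Ioi (hδ : |δ| = 1) :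
    ∫ σ in Ioi (1 + δ), exp (-(c * σ)) * ((√σ)⁻¹ * (√(σ - 2 * δ))⁻¹) =
      exp (-(c * δ)) * K0 c := by
  rw [← image_cosh_add, integral_image_eq_integral_abs_deriv_smul measurableSet_Ioi
    (fun u _ ↦ ((Real.hasDerivAt_cosh u).add_const δ).hasDerivWithinAt)
    (fun _ ha _ hb h ↦ Real.cosh_injOn (Ioi_subset_Ici_self ha) (Ioi_subset_Ici_self hb)
      (add_right_cancel h)),
    setIntegral_congr_fun measurableSet_Ioi (fun u hu ↦ sinh_mul_kernel_cosh hδ hu),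
    integral_const_mul, K0]

end CoshSubstitution

section CosSubstitution

variable (c : ℝ)

lemma sin_mul_kernel_cos {θ : ℝ} (hθ : θ ∈ Ioo 0 π) :
    |sin θ| • (exp (-(c * (1 - cos θ))) * ((√(1 - cos θ))⁻¹ * (√(2 - (1 - cos θ)))⁻¹)) =
      exp (-c) * exp (c * cos θ) := by
  have hsin := Real.sin_pos_of_mem_Ioo hθ
  have hker : sin θ * ((√(1 - cos θ))⁻¹ * (√(2 - (1 - cos θ)))⁻¹) = 1 :=
    mul_inv_sqrt_mul_inv_sqrt (by linarith [Real.cos_le_one θ]) hsin (by rw [Real.sin_sq]; ring)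
  rw [smul_eq_mul, abs_of_pos hsin, mul_left_comm, hker, mul_one, ← Real.exp_add]
  ring_nf

lemma hasDerivWithinAt_one_sub_cos (s : Set ℝ) (θ : ℝ) :
    HasDerivWithinAt (fun θ ↦ 1 - cos θ) (sin θ) s θ := by
  simpa using ((Real.hasDerivAt_cos θ).const_sub 1).hasDerivWithinAt

lemma injOn_one_sub_cos : InjOn (fun θ ↦ 1 - cos θ) (Ioo 0 π) := fun _ ha _ hb h ↦
  Real.injOn_cos (Ioo_subset_Icc_self ha) (Ioo_subset_Icc_self hb) (sub_right_injective h)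

lemma integrableOn_kernel_Ioc :
    IntegrableOn (fun σ ↦ exp (-(c * σ)) * ((√σ)⁻¹ * (√(2 - σ))⁻¹)) (Ioc 0 2) := by
  rw [integrableOn_Ioc_iff_integrableOn_Ioo, ← image_one_sub_cos,
    integrableOn_image_iff_integrableOn_abs_deriv_smul measurableSet_Ioo
      (fun θ _ ↦ hasDerivWithinAt_one_sub_cos _ θ) injOn_one_sub_cos,
    integrableOn_congr_fun (fun θ hθ ↦ sin_mul_kernel_cos c hθ) measurableSet_Ioo]
  exact (Continuous.integrableOn_Icc (by fun_prop)).mono_set Ioo_subset_Icc_self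

lemma integral_kernel_Ioc :
    ∫ σ in Ioc 0 2, exp (-(c * σ)) * ((√σ)⁻¹ * (√(2 - σ))⁻¹) = exp (-c) * (π * I0 c) := by
  rw [integral_Ioc_eq_integral_Ioo, ← image_one_sub_cos,
    integral_image_eq_integral_abs_deriv_smul measurableSet_Ioo
      (fun θ _ ↦ hasDerivWithinAt_one_sub_cos _ θ) injOn_one_sub_cos,
    setIntegral_congr_fun measurableSet_Ioo (fun θ hθ ↦ sin_mul_kernel_cos c hθ),
    integral_const_mul, ← integral_Ioc_eq_integral_Ioo,
    ← intervalIntegral.integral_of_le pi_pos.le, I0, ← mul_assoc π, mul_one_div_cancel pi_ne_zero,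
    one_mul]

end CosSubstitution

lemma integrableOn_abs_kernel {c : ℝ} (hc : 0 < c) :
    IntegrableOn (fun σ ↦ exp (-(c * σ)) * ((√σ)⁻¹ * (√|2 - σ|)⁻¹)) (Ioi 0) := by
  rw [← Ioc_union_Ioi_eq_Ioi (zero_le_two (α := ℝ))]
  refine ((integrableOn_kernel_Ioc c).congr_fun (fun σ hσ ↦ ?_) measurableSet_Ioc).union ?_
  · simp only [abs_of_nonneg (sub_nonneg.2 hσ.2)]
  · have h := integrableOn_kernel_Ioi (δ := 1) abs_one hc
    rw [one_add_one_eq_two, mul_one] at h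
    refine h.congr_fun (fun σ hσ ↦ ?_) measurableSet_Ioi
    simp only [abs_of_neg (sub_neg.2 (mem_Ioi.1 hσ)), neg_sub]

lemma integral_abs_kernel {c : ℝ} (hc : 0 < c) :
    ∫ σ in Ioi (0 : ℝ), exp (-(c * σ)) * ((√σ)⁻¹ * (√|2 - σ|)⁻¹) =
      exp (-c) * (π * I0 c + K0 c) := by
  have hint := integrableOn_abs_kernel hc
  have hIoi := integral_kernel_Ioi (δ := 1) (c := c) abs_one
  rw [one_add_one_eq_two, mul_one, mul_one] at hIoi
  rw [← Ioc_union_Ioi_eq_Ioi (zero_le_two (α := ℝ))] at hint ⊢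
  rw [setIntegral_union (Ioc_disjoint_Ioi le_rfl) measurableSet_Ioi hint.left_of_union
    hint.right_of_union, mul_add, ← integral_kernel_Ioc, ← hIoi]
  congr 1
  · exact setIntegral_congr_fun measurableSet_Ioc fun σ hσ ↦ by
      simp only [abs_of_nonneg (sub_nonneg.2 hσ.2)]
  · exact setIntegral_congr_fun measurableSet_Ioi fun σ hσ ↦ by
      simp only [abs_of_neg (sub_neg.2 (mem_Ioi.1 hσ)), neg_sub]

/-! ### Laplace integrals continuing the Bessel functions -/

/-- The Laplace integral `∫₀^∞ exp(-r σ) σ^(-1/2) (w + s σ)^(-1/2) dσ`. For `x > 0` the values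
at `r = 1`, `w = 2 x` are `exp(x) K₀(x)` if `s = 1` and `exp(-x) (π I₀(x) - i K₀(x))` if `s = -1`;
both extend holomorphically in `w` to the upper half-plane. -/
noncomputable def invSqrtLaplace (s r : ℝ) (w : ℂ) : ℂ :=
  ∫ σ in Ioi (0 : ℝ), ((exp (-(r * σ)) * (√σ)⁻¹ : ℝ) : ℂ) * invSqrt (w + s * σ)

lemma aestronglyMeasurable_exp_mul_invSqrt (s r : ℝ) (w : ℂ) (μ : Measure ℝ) :
    AEStronglyMeasurable
      (fun σ : ℝ ↦ ((exp (-(r * σ)) * (√σ)⁻¹ : ℝ) : ℂ) * invSqrt (w + s * σ)) μ := by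
  have := measurable_invSqrt
  exact Measurable.aestronglyMeasurable (by fun_prop)

lemma norm_exp_mul_inv_sqrt (r σ : ℝ) :
    ‖((exp (-(r * σ)) * (√σ)⁻¹ : ℝ) : ℂ)‖ = exp (-(r * σ)) * (√σ)⁻¹ :=
  Complex.norm_of_nonneg (by positivity)

lemma integrableOn_exp_mul_inv_sqrt :
    IntegrableOn (fun σ : ℝ ↦ exp (-(1 * σ)) * (√σ)⁻¹) (Ioi 0) := by
  refine (Real.GammaIntegral_convergent (s := 1 / 2) (by norm_num)).congr_fun (fun σ hσ ↦ ?_)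
    measurableSet_Ioi
  simp only [one_mul]
  rw [Real.sqrt_eq_rpow, ← Real.rpow_neg (le_of_lt hσ)]
  norm_num

lemma integral_exp_mul_inv_sqrt : ∫ σ in Ioi (0 : ℝ), exp (-(1 * σ)) * (√σ)⁻¹ = √π := by
  rw [← Real.Gamma_one_half_eq, Real.Gamma_eq_integral (by norm_num)]
  refine setIntegral_congr_fun measurableSet_Ioi fun σ hσ ↦ ?_
  simp only [one_mul]
  rw [Real.sqrt_eq_rpow, ← Real.rpow_neg (le_of_lt hσ)]
  norm_num

lemma invSqrtLaplace_eq_one (s : ℝ) {r : ℝ} (hr : 0 < r) (w : ℂ) :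
    invSqrtLaplace s r w = invSqrtLaplace s 1 (r * w) := by
  have hscale := integral_comp_mul_left_Ioi
    (fun τ : ℝ ↦ ((exp (-(1 * τ)) * (√τ)⁻¹ : ℝ) : ℂ) * invSqrt (r * w + s * τ)) 0 hr
  rw [mul_zero, eq_inv_smul_iff₀ hr.ne', ← integral_smul] at hscale
  rw [invSqrtLaplace, invSqrtLaplace, ← hscale]
  refine setIntegral_congr_fun measurableSet_Ioi fun σ _ ↦ ?_
  have harg : (r : ℂ) * w + s * (r * σ : ℝ) = r * (w + s * σ) := by push_cast; ring
  have hr' : (r : ℂ) * ((√r : ℂ)⁻¹ * (√r : ℂ)⁻¹) = 1 := by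
    rw [← mul_inv, ← Complex.ofReal_mul, Real.mul_self_sqrt hr.le,
      mul_inv_cancel₀ (by simp [hr.ne'])]
  rw [harg, invSqrt_ofReal_mul hr, Complex.real_smul, Real.sqrt_mul hr.le, one_mul, mul_inv]
  push_cast
  linear_combination -Complex.exp (-(r * σ)) * (√σ : ℂ)⁻¹ * invSqrt (w + s * σ) * hr'

section Bounds

variable {s : ℝ}

lemma abs_two_sub_le_norm (hs : |s| = 1) {ζ : ℂ} (hζ : ‖ζ‖ = 1) {σ : ℝ} (hσ : 0 ≤ σ) :
    |2 - σ| ≤ ‖2 * ζ + s * σ‖ := by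
  have h := abs_norm_sub_norm_le (2 * ζ) (-(s * σ : ℂ))
  simpa [hζ, hs, abs_of_nonneg hσ] using h

lemma norm_exp_mul_invSqrt_le (hs : |s| = 1) {ζ : ℂ} (hζ : ‖ζ‖ = 1) (r : ℝ) {σ : ℝ}
    (hσ : 0 ≤ σ) (hσ2 : σ ≠ 2) :
    ‖((exp (-(r * σ)) * (√σ)⁻¹ : ℝ) : ℂ) * invSqrt (2 * ζ + s * σ)‖ ≤
      exp (-(r * σ)) * ((√σ)⁻¹ * (√|2 - σ|)⁻¹) := by
  have : 0 < |2 - σ| := abs_pos.2 (sub_ne_zero.2 hσ2.symm)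
  rw [norm_mul, norm_exp_mul_inv_sqrt, norm_invSqrt, mul_assoc]
  gcongr
  exact abs_two_sub_le_norm hs hζ hσ

lemma ae_pos_and_ne_two : ∀ᵐ σ ∂volume.restrict (Ioi (0 : ℝ)), 0 < σ ∧ σ ≠ 2 :=
  (ae_restrict_mem measurableSet_Ioi).and
    (ae_restrict_of_ae (compl_mem_ae_iff.2 (measure_singleton (2 : ℝ))))

/-- The common majorant of `invSqrtLaplace (±1) 1` on the closed upper half-plane, as a function
of the modulus. -/
noncomputable def besselMajorant (ρ : ℝ) : ℝ := exp (-ρ) * (π * I0 ρ + K0 ρ)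

lemma invSqrtLaplace_eq_norm (s : ℝ) {z : ℂ} (hz : z ≠ 0) :
    invSqrtLaplace s 1 (2 * z) = invSqrtLaplace s ‖z‖ (2 * (z / ‖z‖)) := by
  have hz' : (‖z‖ : ℂ) ≠ 0 := by exact_mod_cast norm_ne_zero_iff.2 hz
  rw [invSqrtLaplace_eq_one s (norm_pos_iff.2 hz)]
  congr 1
  field_simp

lemma norm_div_norm_self {z : ℂ} (hz : z ≠ 0) : ‖z / ‖z‖‖ = 1 := by
  simp [hz]

lemma norm_invSqrtLaplace_le (hs : |s| = 1) {z : ℂ} (hz : z ≠ 0) :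
    ‖invSqrtLaplace s 1 (2 * z)‖ ≤ besselMajorant ‖z‖ := by
  have hρ : 0 < ‖z‖ := norm_pos_iff.2 hz
  rw [invSqrtLaplace_eq_norm s hz, besselMajorant, ← integral_abs_kernel hρ]
  refine norm_integral_le_of_norm_le (integrableOn_abs_kernel hρ) ?_
  filter_upwards [ae_pos_and_ne_two] with σ hσ
  exact norm_exp_mul_invSqrt_le hs (norm_div_norm_self hz) _ hσ.1.le hσ.2

lemma continuousWithinAt_exp_mul_invSqrt (hs : |s| = 1) {z : ℂ} (hz : z ≠ 0) {σ : ℝ}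
    (hσ : 0 < σ) (hσ2 : σ ≠ 2) :
    ContinuousWithinAt (fun z : ℂ ↦ ((exp (-(‖z‖ * σ)) * (√σ)⁻¹ : ℝ) : ℂ) *
      invSqrt (2 * (z / ‖z‖) + s * σ)) {z | 0 ≤ z.im} z := by
  have hne : 2 * (z / ‖z‖) + s * σ ≠ 0 := fun h ↦ by
    have := abs_two_sub_le_norm hs (norm_div_norm_self hz) hσ.le
    rw [h, norm_zero, abs_nonpos_iff] at this
    exact hσ2 (by linarith)
  have hbase : ContinuousAt (fun z : ℂ ↦ 2 * (z / ‖z‖) + s * σ) z := by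
    have : (‖z‖ : ℂ) ≠ 0 := by exact_mod_cast norm_ne_zero_iff.2 hz
    fun_prop (disch := assumption)
  have hweight : Continuous fun z : ℂ ↦ ((exp (-(‖z‖ * σ)) * (√σ)⁻¹ : ℝ) : ℂ) := by fun_prop
  refine hweight.continuousWithinAt.mul (ContinuousWithinAt.comp (g := invSqrt)
    (f := fun z : ℂ ↦ 2 * (z / ‖z‖) + s * σ) (t := {w : ℂ | 0 ≤ w.im})
    (continuousWithinAt_invSqrt hne) hbase.continuousWithinAt fun v hv ↦ ?_)
  have hreal : 2 * (v / ‖v‖) + (s * σ : ℂ) = ((2 / ‖v‖ : ℝ) : ℂ) * v + (s * σ : ℝ) := by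
    push_cast; ring
  have hv' : 0 ≤ v.im := hv
  change 0 ≤ (2 * (v / ‖v‖) + s * σ : ℂ).im
  rw [hreal, Complex.add_im, Complex.im_ofReal_mul, Complex.ofReal_im, add_zero]
  positivity

lemma continuousWithinAt_invSqrtLaplace (hs : |s| = 1) {z : ℂ} (hz : z ≠ 0) :
    ContinuousWithinAt (fun z ↦ invSqrtLaplace s 1 (2 * z)) {z | 0 ≤ z.im} z := by
  have hρ : 0 < ‖z‖ := norm_pos_iff.2 hz
  have hscaled : ContinuousWithinAt (fun z : ℂ ↦ invSqrtLaplace s ‖z‖ (2 * (z / ‖z‖)))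
      {z | 0 ≤ z.im} z := by
    refine continuousWithinAt_of_dominated
      (bound := fun σ ↦ exp (-(‖z‖ / 2 * σ)) * ((√σ)⁻¹ * (√|2 - σ|)⁻¹))
      (.of_forall fun z ↦ aestronglyMeasurable_exp_mul_invSqrt _ _ _ _) ?_
      (integrableOn_abs_kernel (half_pos hρ)) ?_
    · filter_upwards [mem_nhdsWithin_of_mem_nhds
        (continuous_norm.continuousAt.eventually (lt_mem_nhds (half_lt_self hρ)))] with v hv
      have hv0 : v ≠ 0 := norm_pos_iff.1 ((half_pos hρ).trans hv)
      filter_upwards [ae_pos_and_ne_two] with σ hσ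
      refine (norm_exp_mul_invSqrt_le hs (norm_div_norm_self hv0) _ hσ.1.le hσ.2).trans ?_
      have := hσ.1.le
      gcongr
    · filter_upwards [ae_pos_and_ne_two] with σ hσ
      exact continuousWithinAt_exp_mul_invSqrt hs hz hσ.1 hσ.2
  refine hscaled.congr_of_eventuallyEq ?_ (invSqrtLaplace_eq_norm s hz)
  filter_upwards [mem_nhdsWithin_of_mem_nhds (isOpen_ne.mem_nhds hz)] with v hv
  exact invSqrtLaplace_eq_norm s hv

end Bounds

lemma invSqrtLaplace_one_ofReal {x : ℝ} (hx : 0 < x) :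
    invSqrtLaplace 1 1 (2 * x) = (exp x * K0 x : ℝ) := by
  have hkernel := integral_kernel_Ioi (δ := -1) (c := x) (by simp)
  rw [add_neg_cancel, mul_neg_one x, neg_neg] at hkernel
  rw [mul_comm, ← invSqrtLaplace_eq_one 1 hx, invSqrtLaplace, ← hkernel, ← integral_complex_ofReal]
  refine setIntegral_congr_fun measurableSet_Ioi fun σ hσ ↦ ?_
  have harg : (2 : ℂ) + (1 : ℝ) * σ = (σ - 2 * -1 : ℝ) := by push_cast; ring
  rw [harg, invSqrt_ofReal (by linarith [mem_Ioi.1 hσ]), ← Complex.ofReal_mul, mul_assoc]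

lemma invSqrt_neg_ofReal {x : ℝ} (hx : 0 ≤ x) :
    invSqrt (-x) = -Complex.I * ((√x)⁻¹ : ℝ) := by
  have h := invSqrt_neg_conj (w := x) (by simp)
  rwa [Complex.conj_ofReal, invSqrt_ofReal hx, Complex.conj_ofReal] at h

lemma invSqrtLaplace_neg_one_ofReal {x : ℝ} (hx : 0 < x) :
    invSqrtLaplace (-1) 1 (2 * x) = exp (-x) * (π * I0 x - Complex.I * K0 x) := by
  let f : ℝ → ℂ := fun σ ↦
    ((exp (-(x * σ)) * (√σ)⁻¹ : ℝ) : ℂ) * invSqrt (2 + (-1 : ℝ) * σ)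
  have hkernel := integral_kernel_Ioi (δ := 1) (c := x) abs_one
  have hintegrable := integrableOn_kernel_Ioi abs_one hx
  rw [one_add_one_eq_two, mul_one, mul_one] at hkernel
  rw [one_add_one_eq_two, mul_one] at hintegrable
  have hIoc : EqOn (fun σ ↦ ((exp (-(x * σ)) * ((√σ)⁻¹ * (√(2 - σ))⁻¹) : ℝ) : ℂ)) f
      (Ioc 0 2) := fun σ hσ ↦ by
    have harg : (2 : ℂ) + (-1 : ℝ) * σ = (2 - σ : ℝ) := by push_cast; ring
    simp only [f]
    rw [harg, invSqrt_ofReal (sub_nonneg.2 hσ.2), ← Complex.ofReal_mul, mul_assoc]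
  have hIoi : EqOn (fun σ ↦ -Complex.I * ((exp (-(x * σ)) * ((√σ)⁻¹ * (√(σ - 2))⁻¹) : ℝ) : ℂ)) f
      (Ioi 2) := fun σ hσ ↦ by
    have harg : (2 : ℂ) + (-1 : ℝ) * σ = -(σ - 2 : ℝ) := by push_cast; ring
    simp only [f]
    rw [harg, invSqrt_neg_ofReal (sub_nonneg.2 (le_of_lt hσ))]
    push_cast
    ring
  have hfIoc : IntegrableOn f (Ioc 0 2) :=
    (integrableOn_congr_fun hIoc measurableSet_Ioc).1 (integrableOn_kernel_Ioc x).ofReal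
  have hfIoi : IntegrableOn f (Ioi 2) :=
    (integrableOn_congr_fun hIoi measurableSet_Ioi).1 (hintegrable.ofReal.const_mul _)
  calc invSqrtLaplace (-1) 1 (2 * x) = ∫ σ in Ioc 0 2 ∪ Ioi 2, f σ := by
        rw [mul_comm, ← invSqrtLaplace_eq_one _ hx, Ioc_union_Ioi_eq_Ioi zero_le_two]
        rfl
    _ = exp (-x) * (π * I0 x - Complex.I * K0 x) := by
        rw [setIntegral_union (Ioc_disjoint_Ioi le_rfl) measurableSet_Ioi hfIoc hfIoi,
          ← setIntegral_congr_fun measurableSet_Ioc hIoc,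
          ← setIntegral_congr_fun measurableSet_Ioi hIoi, integral_const_mul,
          integral_complex_ofReal, integral_complex_ofReal, integral_kernel_Ioc, hkernel]
        push_cast
        ring

lemma invSqrtLaplace_neg_conj (s r : ℝ) {w : ℂ} (hw : 0 ≤ w.im) :
    invSqrtLaplace s r (-(starRingEnd ℂ) w) =
      -Complex.I * (starRingEnd ℂ) (invSqrtLaplace (-s) r w) := by
  rw [invSqrtLaplace, invSqrtLaplace, ← integral_conj, ← integral_const_mul]
  refine integral_congr_ae (.of_forall fun σ ↦ ?_)
  have harg : -(starRingEnd ℂ) w + s * σ = -(starRingEnd ℂ) (w + (-s : ℝ) * σ) := by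
    simp only [map_add, map_mul, Complex.conj_ofReal]
    push_cast
    ring
  have him : 0 ≤ (w + (-s : ℝ) * σ).im := by simpa using hw
  beta_reduce
  rw [harg, invSqrt_neg_conj him, map_mul, Complex.conj_ofReal]
  ring

lemma im_le_norm_add_ofReal_mul (w : ℂ) (s σ : ℝ) : w.im ≤ ‖w + s * σ‖ := by
  simpa using Complex.im_le_norm (w + s * σ)

lemma norm_invSqrt_add_le {w : ℂ} {δ : ℝ} (hδ : 0 < δ) (hw : δ ≤ w.im) (s σ : ℝ) :
    ‖invSqrt (w + s * σ)‖ ≤ (√δ)⁻¹ := by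
  rw [norm_invSqrt]
  gcongr
  exact hw.trans (im_le_norm_add_ofReal_mul w s σ)

lemma differentiableAt_invSqrtLaplace (s : ℝ) {w : ℂ} (hw : 0 < w.im) :
    DifferentiableAt ℂ (invSqrtLaplace s 1) w := by
  have hhalf : 0 < w.im / 2 := half_pos hw
  have hnhds : {v : ℂ | w.im / 2 < v.im} ∈ 𝓝 w :=
    Complex.continuous_im.continuousAt.eventually (lt_mem_nhds (half_lt_self hw))
  refine (hasDerivAt_integral_of_dominated_loc_of_deriv_le hnhds
    (F' := fun v σ ↦ ((exp (-(1 * σ)) * (√σ)⁻¹ : ℝ) : ℂ) *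
      (-1 / 2 * invSqrt (v + s * σ) * (v + s * σ)⁻¹))
    (bound := fun σ ↦ exp (-(1 * σ)) * (√σ)⁻¹ * (1 / 2 * (√(w.im / 2))⁻¹ * (w.im / 2)⁻¹))
    (.of_forall fun v ↦ aestronglyMeasurable_exp_mul_invSqrt _ _ _ _) ?_ ?_ ?_
    (integrableOn_exp_mul_inv_sqrt.mul_const _) ?_).2.differentiableAt
  · refine (integrableOn_exp_mul_inv_sqrt.mul_const (√w.im)⁻¹).mono'
      (aestronglyMeasurable_exp_mul_invSqrt _ _ _ _) (.of_forall fun σ ↦ ?_)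
    rw [norm_mul, norm_exp_mul_inv_sqrt]
    gcongr
    exact norm_invSqrt_add_le hw le_rfl s σ
  · have := measurable_invSqrt
    exact Measurable.aestronglyMeasurable (by fun_prop)
  · refine .of_forall fun σ v hv ↦ ?_
    rw [norm_mul, norm_exp_mul_inv_sqrt, norm_mul, norm_mul, norm_inv]
    have hsqrt := norm_invSqrt_add_le hhalf (le_of_lt hv) s σ
    have hinv := (le_of_lt hv).trans (im_le_norm_add_ofReal_mul v s σ)
    norm_num only [norm_neg, norm_div, norm_one, Complex.norm_ofNat]
    gcongr
  · refine .of_forall fun σ v hv ↦ ?_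
    have him : 0 < (v + s * σ).im := by simpa using hhalf.trans hv
    simpa using (((hasDerivAt_invSqrt him).comp v ((hasDerivAt_id v).add_const _)).const_mul _)

lemma tendsto_invSqrtLaplace_nhds_zero {w : ℂ} (hw : 0 < w.im) :
    Tendsto (fun s ↦ invSqrtLaplace s 1 w) (𝓝 0) (𝓝 (√π * invSqrt w)) := by
  have hlim : ∫ σ in Ioi (0 : ℝ), ((exp (-(1 * σ)) * (√σ)⁻¹ : ℝ) : ℂ) * invSqrt w =
      √π * invSqrt w := by
    rw [integral_mul_const, integral_complex_ofReal, integral_exp_mul_inv_sqrt]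
  rw [← hlim]
  refine tendsto_integral_filter_of_dominated_convergence
    (fun σ ↦ exp (-(1 * σ)) * (√σ)⁻¹ * (√w.im)⁻¹)
    (.of_forall fun s ↦ aestronglyMeasurable_exp_mul_invSqrt _ _ _ _)
    (.of_forall fun s ↦ .of_forall fun σ ↦ ?_) (integrableOn_exp_mul_inv_sqrt.mul_const _)
    (.of_forall fun σ ↦ ?_)
  · rw [norm_mul, norm_exp_mul_inv_sqrt]
    gcongr
    exact norm_invSqrt_add_le hw le_rfl s σ
  · have hbase : Tendsto (fun s : ℝ ↦ w + s * σ) (𝓝 0) (𝓝 w) := by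
      have : Continuous fun s : ℝ ↦ w + s * σ := by fun_prop
      simpa using this.tendsto 0
    exact ((hasDerivAt_invSqrt hw).continuousAt.tendsto.comp hbase).const_mul _

lemma sqrt_mul_invSqrtLaplace (s : ℝ) {T : ℝ} (hT : 0 < T) (w : ℂ) :
    √T * invSqrtLaplace s 1 (T * w) = invSqrtLaplace (s / T) 1 w := by
  rw [invSqrtLaplace, invSqrtLaplace, ← integral_const_mul]
  refine integral_congr_ae (.of_forall fun σ ↦ ?_)
  have hT' : (T : ℂ) ≠ 0 := by exact_mod_cast hT.ne'
  have hsqrt : (√T : ℂ) ≠ 0 := by exact_mod_cast (Real.sqrt_pos.2 hT).ne'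
  have harg : (T : ℂ) * w + s * σ = T * (w + (s / T : ℝ) * σ) := by push_cast; field_simp
  beta_reduce
  rw [harg, invSqrt_ofReal_mul hT, Complex.ofReal_inv]
  field_simp

lemma tendsto_sqrt_mul_invSqrtLaplace (s : ℝ) {w : ℂ} (hw : 0 < w.im) :
    Tendsto (fun T : ℝ ↦ √T * invSqrtLaplace s 1 (T * w)) atTop (𝓝 (√π * invSqrt w)) := by
  refine ((tendsto_invSqrtLaplace_nhds_zero hw).comp
    (tendsto_const_nhds (x := s) |>.div_atTop tendsto_id)).congr' ?_
  filter_upwards [eventually_gt_atTop 0] with T hT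
  exact (sqrt_mul_invSqrtLaplace s hT w).symm

/-! ### A contour integral over the first quadrant -/

/-- The closed first quadrant of the complex plane. -/
def closedQuadrant : Set ℂ := Ici 0 ×ℂ Ici 0

lemma mem_closedQuadrant {z : ℂ} : z ∈ closedQuadrant ↔ 0 ≤ z.re ∧ 0 ≤ z.im := Iff.rfl

lemma ofReal_mul_mem_closedQuadrant {T : ℝ} (hT : 0 ≤ T) {z : ℂ} (hz : z ∈ closedQuadrant) :
    T * z ∈ closedQuadrant := by
  rw [mem_closedQuadrant] at hz ⊢
  rw [Complex.re_ofReal_mul, Complex.im_ofReal_mul]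
  exact ⟨mul_nonneg hT hz.1, mul_nonneg hT hz.2⟩

section Contour

variable {F : ℂ → ℂ} {c : ℂ} {C : ℝ}

lemma tendsto_mul_integral_segment {α β : ℂ} (hF : ContinuousOn F closedQuadrant)
    (hbound : ∀ z ∈ closedQuadrant, 1 ≤ ‖z‖ → ‖z * F z‖ ≤ C)
    (hray : ∀ z ∈ closedQuadrant, 0 < z.im →
      Tendsto (fun T : ℝ ↦ T * F (T * z)) atTop (𝓝 (c / z)))
    (hmem : ∀ s ∈ Ioc (0 : ℝ) 1, α + s * β ∈ closedQuadrant)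
    (him : ∀ s ∈ Ioc (0 : ℝ) 1, 0 < (α + s * β).im)
    (hnorm : ∀ s ∈ Ioc (0 : ℝ) 1, 1 ≤ ‖α + s * β‖) :
    Tendsto (fun T : ℝ ↦ (T : ℂ) * ∫ s in (0 : ℝ)..1, F (T * (α + s * β))) atTop
      (𝓝 (∫ s in (0 : ℝ)..1, c / (α + s * β))) := by
  simp only [← intervalIntegral.integral_const_mul]
  refine intervalIntegral.tendsto_integral_filter_of_dominated_convergence (fun _ ↦ C) ?_ ?_
    intervalIntegrable_const (.of_forall fun s hs ↦ ?_)
  · filter_upwards [eventually_ge_atTop 0] with T hT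
    rw [uIoc_of_le zero_le_one]
    refine ContinuousOn.aestronglyMeasurable (ContinuousOn.mul continuousOn_const
      (hF.comp (by fun_prop) fun s hs ↦ ofReal_mul_mem_closedQuadrant hT (hmem s hs)))
      measurableSet_Ioc
  · filter_upwards [eventually_ge_atTop 1] with T hT
    refine .of_forall fun s hs ↦ ?_
    rw [uIoc_of_le zero_le_one] at hs
    have hz := hnorm s hs
    have hTz : 1 ≤ ‖(T : ℂ) * (α + s * β)‖ := by
      rw [norm_mul, Complex.norm_of_nonneg (zero_le_one.trans hT)]
      exact one_le_mul_of_one_le_of_one_le hT hz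
    have h := hbound _ (ofReal_mul_mem_closedQuadrant (zero_le_one.trans hT) (hmem s hs)) hTz
    rw [mul_right_comm, norm_mul] at h
    exact (le_mul_of_one_le_right (norm_nonneg _) hz).trans h
  · rw [uIoc_of_le zero_le_one] at hs
    exact hray _ (hmem s hs) (him s hs)

lemma integral_ofReal_eq_of_differentiableOn (hF : ContinuousOn F closedQuadrant)
    (hdiff : DifferentiableOn ℂ F (Ioi 0 ×ℂ Ioi 0)) {T : ℝ} (hT : 0 ≤ T) :
    ∫ x in (0 : ℝ)..T, F x =
      T * (∫ s in (0 : ℝ)..1, F (T * (Complex.I + s * 1))) -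
        Complex.I * (T * ∫ s in (0 : ℝ)..1, F (T * (1 + s * Complex.I))) +
        Complex.I * ∫ y in (0 : ℝ)..T, F (y * Complex.I) := by
  have hscale (g : ℝ → ℂ) : ∫ x in (0 : ℝ)..T, g x = T * ∫ s in (0 : ℝ)..1, g (T * s) := by
    have := intervalIntegral.smul_integral_comp_mul_left (a := 0) (b := 1) g T
    rw [mul_zero, mul_one] at this
    rw [← this, Complex.real_smul]
  have htop := hscale fun x ↦ F (x + T * Complex.I)
  have hright := hscale fun y ↦ F (T + y * Complex.I)
  have hre : (T + T * Complex.I).re = T := by simp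
  have him : (T + T * Complex.I).im = T := by simp
  have hrect := Complex.integral_boundary_rect_eq_zero_of_continuousOn_of_differentiableOn F 0
    (T + T * Complex.I)
    (hF.mono (by
      rw [hre, him, Complex.zero_re, Complex.zero_im, uIcc_of_le hT]
      exact Complex.reProdIm_subset_iff.2 (prod_mono Icc_subset_Ici_self Icc_subset_Ici_self)))
    (hdiff.mono (by
      rw [hre, him, Complex.zero_re, Complex.zero_im, min_eq_left hT]
      exact Complex.reProdIm_subset_iff.2 (prod_mono Ioo_subset_Ioi_self Ioo_subset_Ioi_self)))
  simp only [hre, him, Complex.zero_re, Complex.zero_im, Complex.ofReal_zero, zero_mul, add_zero,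
    zero_add, smul_eq_mul] at hrect
  rw [htop, hright] at hrect
  have hcorner : ∀ s : ℝ, (T : ℂ) * (Complex.I + s * 1) = (T * s : ℝ) + T * Complex.I :=
    fun s ↦ by push_cast; ring
  have hcorner' : ∀ s : ℝ, (T : ℂ) * (1 + s * Complex.I) = T + (T * s : ℝ) * Complex.I :=
    fun s ↦ by push_cast; ring
  simp only [hcorner, hcorner']
  linear_combination hrect

lemma integral_im_ofReal_eq (hF : ContinuousOn F closedQuadrant)
    (hdiff : DifferentiableOn ℂ F (Ioi 0 ×ℂ Ioi 0))
    (haxis : ∀ y : ℝ, 0 ≤ y → (F (y * Complex.I)).re = 0) {T : ℝ} (hT : 0 ≤ T) :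
    ∫ x in (0 : ℝ)..T, (F x).im =
      (T * (∫ s in (0 : ℝ)..1, F (T * (Complex.I + s * 1))) -
        Complex.I * (T * ∫ s in (0 : ℝ)..1, F (T * (1 + s * Complex.I)))).im := by
  have hint (u : ℂ) (hu : u ∈ closedQuadrant) :
      IntervalIntegrable (fun x : ℝ ↦ F (x * u)) volume 0 T := by
    refine (hF.comp (by fun_prop) fun x hx ↦ ?_).intervalIntegrable
    rw [uIcc_of_le hT] at hx
    exact ofReal_mul_mem_closedQuadrant hx.1 hu
  have hreal : IntervalIntegrable (fun x : ℝ ↦ F x) volume 0 T := by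
    simpa using hint 1 (by simp [mem_closedQuadrant])
  have hleft : (∫ y in (0 : ℝ)..T, F (y * Complex.I)).re = 0 := by
    refine (Complex.reCLM.intervalIntegral_comp_comm
      (hint Complex.I (by simp [mem_closedQuadrant]))).symm.trans ?_
    refine intervalIntegral.integral_zero_ae (.of_forall fun y hy ↦ ?_)
    rw [uIoc_of_le hT] at hy
    exact haxis y hy.1.le
  refine (Complex.imCLM.intervalIntegral_comp_comm hreal).trans ?_
  rw [Complex.imCLM_apply, integral_ofReal_eq_of_differentiableOn hF hdiff hT, Complex.add_im,
    Complex.I_mul_im, hleft, add_zero]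

lemma integral_inv_edges (c : ℂ) :
    (∫ s in (0 : ℝ)..1, c / (Complex.I + s * 1)) -
      Complex.I * (∫ s in (0 : ℝ)..1, c / (1 + s * Complex.I)) = -(π / 2) * Complex.I * c := by
  have htop (s : ℝ) : Complex.I + s * 1 ≠ 0 := fun h ↦ by simpa using congrArg Complex.im h
  have hright (s : ℝ) : 1 + s * Complex.I ≠ 0 := fun h ↦ by simpa using congrArg Complex.re h
  have hsum (s : ℝ) : c / (Complex.I + s * 1) - Complex.I * (c / (1 + s * Complex.I)) =
      -2 * Complex.I * c * ((1 + s ^ 2 : ℝ)⁻¹ : ℝ) := by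
    have hprod : (Complex.I + s * 1) * (1 + s * Complex.I) = Complex.I * (1 + s ^ 2 : ℝ) := by
      push_cast
      linear_combination (s : ℂ) * Complex.I_sq
    have hne : ((1 + s ^ 2 : ℝ) : ℂ) ≠ 0 := by exact_mod_cast (by positivity : 1 + s ^ 2 ≠ 0)
    rw [← mul_div_assoc, div_sub_div _ _ (htop s) (hright s), hprod,
      div_eq_iff (mul_ne_zero Complex.I_ne_zero hne), Complex.ofReal_inv]
    linear_combination c * Complex.I_sq + 2 * Complex.I ^ 2 * c * mul_inv_cancel₀ hne
  rw [← intervalIntegral.integral_const_mul, ← intervalIntegral.integral_sub]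
  · simp only [hsum]
    rw [intervalIntegral.integral_const_mul, intervalIntegral.integral_ofReal,
      integral_inv_one_add_sq, arctan_one, arctan_zero]
    push_cast
    ring
  · exact Continuous.intervalIntegrable (by fun_prop (disch := exact htop _)) _ _
  · exact Continuous.intervalIntegrable (by fun_prop (disch := exact hright _)) _ _

lemma tendsto_integral_im_atTop (hF : ContinuousOn F closedQuadrant)
    (hdiff : DifferentiableOn ℂ F (Ioi 0 ×ℂ Ioi 0))
    (haxis : ∀ y : ℝ, 0 ≤ y → (F (y * Complex.I)).re = 0)
    (hbound : ∀ z ∈ closedQuadrant, 1 ≤ ‖z‖ → ‖z * F z‖ ≤ C)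
    (hray : ∀ z ∈ closedQuadrant, 0 < z.im →
      Tendsto (fun T : ℝ ↦ T * F (T * z)) atTop (𝓝 (c / z))) :
    Tendsto (fun T : ℝ ↦ ∫ x in (0 : ℝ)..T, (F x).im) atTop (𝓝 (-(π / 2) * c.re)) := by
  have hone_le {z : ℂ} (h : 1 ≤ z.re ∨ 1 ≤ z.im) : 1 ≤ ‖z‖ :=
    h.elim (fun h ↦ h.trans (Complex.re_le_norm z)) fun h ↦ h.trans (Complex.im_le_norm z)
  have htop := tendsto_mul_integral_segment (α := Complex.I) (β := 1) hF hbound hray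
    (fun s hs ↦ by simp [mem_closedQuadrant, hs.1.le]) (fun s _ ↦ by simp)
    (fun s _ ↦ hone_le (by simp))
  have hright := tendsto_mul_integral_segment (α := 1) (β := Complex.I) hF hbound hray
    (fun s hs ↦ by simp [mem_closedQuadrant, hs.1.le]) (fun s hs ↦ by simp [hs.1])
    (fun s _ ↦ hone_le (by simp))
  have hlim := (Complex.continuous_im.tendsto _).comp (htop.sub (hright.const_mul Complex.I))
  rw [integral_inv_edges] at hlim
  have hc : (-(π / 2) * Complex.I * c : ℂ).im = -(π / 2) * c.re := by
    rw [show (-(π / 2) * Complex.I * c : ℂ) = ((-(π / 2) : ℝ) : ℂ) * (Complex.I * c) by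
      push_cast; ring, Complex.im_ofReal_mul, Complex.I_mul_im]
  rw [hc] at hlim
  refine hlim.congr' ?_
  filter_upwards [eventually_ge_atTop 0] with T hT
  exact (integral_im_ofReal_eq hF hdiff haxis hT).symm

end Contour

/-! ### The analytic function with boundary values `K₀ (K₀ + i π I₀)` -/

/-- The product `K₀(z) K₀(e^(-iπ) z)` of Hankel-type solutions of Bessel's equation on the closed
upper half-plane. It equals `K₀ (K₀ + i π I₀)` on the positive reals, is real on the positive
imaginary axis, and its powers link the moments `∫ t I₀ᵃ K₀ᵇ` by contour integration. -/
noncomputable def hankelProduct (z : ℂ) : ℂ :=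
  Complex.I * invSqrtLaplace 1 1 (2 * z) * invSqrtLaplace (-1) 1 (2 * z)

lemma hankelProduct_ofReal {x : ℝ} (hx : 0 < x) :
    hankelProduct x = K0 x * (K0 x + Complex.I * (π * I0 x)) := by
  have hexp : Complex.exp x * Complex.exp (-x) = 1 := by rw [← Complex.exp_add]; simp
  rw [hankelProduct, invSqrtLaplace_one_ofReal hx, invSqrtLaplace_neg_one_ofReal hx]
  push_cast
  linear_combination (K0 x * (π * I0 x * Complex.I + K0 x) : ℂ) * hexp -
    (K0 x ^ 2 * Complex.exp x * Complex.exp (-x) : ℂ) * Complex.I_sq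

lemma exists_hankelProduct_eq_ofReal {y : ℝ} (hy : 0 ≤ y) :
    ∃ r : ℝ, hankelProduct (y * Complex.I) = r := by
  have hconj : -(starRingEnd ℂ) (2 * (y * Complex.I)) = 2 * (y * Complex.I) := by
    rw [map_mul, map_mul, Complex.conj_I, Complex.conj_ofReal, map_ofNat]
    ring
  have hneg := invSqrtLaplace_neg_conj (-1) 1 (w := 2 * (y * Complex.I)) (by simpa using hy)
  rw [hconj, neg_neg] at hneg
  refine ⟨Complex.normSq (invSqrtLaplace 1 1 (2 * (y * Complex.I))), ?_⟩
  rw [hankelProduct, hneg, Complex.normSq_eq_conj_mul_self]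
  linear_combination -(invSqrtLaplace 1 1 (2 * (y * Complex.I)) *
    (starRingEnd ℂ) (invSqrtLaplace 1 1 (2 * (y * Complex.I)))) * Complex.I_sq

lemma differentiableAt_hankelProduct {z : ℂ} (hz : 0 < z.im) :
    DifferentiableAt ℂ hankelProduct z := by
  have him : 0 < (2 * z).im := by simpa using hz
  have hdiff (s : ℝ) : DifferentiableAt ℂ (fun z ↦ invSqrtLaplace s 1 (2 * z)) z :=
    (differentiableAt_invSqrtLaplace s him).comp z (differentiableAt_id.const_mul 2)
  exact ((hdiff 1).const_mul _).mul (hdiff (-1))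

lemma continuousWithinAt_hankelProduct {z : ℂ} (hz : z ≠ 0) :
    ContinuousWithinAt hankelProduct {z | 0 ≤ z.im} z :=
  (continuousWithinAt_const.mul (continuousWithinAt_invSqrtLaplace (by simp) hz)).mul
    (continuousWithinAt_invSqrtLaplace (by simp) hz)

lemma tendsto_mul_hankelProduct_atTop {z : ℂ} (hz : 0 < z.im) :
    Tendsto (fun T : ℝ ↦ T * hankelProduct (T * z)) atTop (𝓝 (Complex.I * π / (2 * z))) := by
  have him : 0 < (2 * z).im := by simpa using hz
  have hlim := ((tendsto_sqrt_mul_invSqrtLaplace 1 him).const_mul Complex.I).mul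
    (tendsto_sqrt_mul_invSqrtLaplace (-1) him)
  have hsqrt {r : ℝ} (hr : 0 ≤ r) : (√r : ℂ) * √r = r := by
    exact_mod_cast Real.mul_self_sqrt hr
  have hval : Complex.I * (√π * invSqrt (2 * z)) * (√π * invSqrt (2 * z)) =
      Complex.I * π / (2 * z) := by
    rw [div_eq_mul_inv, ← invSqrt_mul_self, ← hsqrt pi_pos.le]
    ring
  rw [hval] at hlim
  refine hlim.congr' ?_
  filter_upwards [eventually_ge_atTop 0] with T hT
  rw [hankelProduct, ← mul_assoc, ← mul_assoc, mul_left_comm 2 (T : ℂ) z]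
  nth_rw 3 [← hsqrt hT]
  ring

lemma exp_neg_mul_I0_le {a : ℝ} (ha : a ∈ Icc 0 (1 / 2)) {ρ : ℝ} (hρ : 0 < ρ) :
    exp (-ρ) * I0 ρ ≤ π * ρ ^ (-a) := by
  have hexp : exp (-ρ) * exp ρ = 1 := by rw [← Real.exp_add]; simp
  rcases le_total ρ 1 with hρ1 | hρ1
  · calc exp (-ρ) * I0 ρ ≤ exp (-ρ) * exp ρ := by gcongr; exact I0_le_exp hρ.le
      _ ≤ π * ρ ^ (-a) := by
        rw [hexp]
        exact one_le_mul_of_one_le_of_one_le (by linarith [pi_gt_three])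
          (one_le_rpow_of_pos_of_le_one_of_nonpos hρ hρ1 (neg_nonpos.2 ha.1))
  · calc exp (-ρ) * I0 ρ ≤ exp (-ρ) * (exp ρ * (π / √ρ)) := by
          gcongr; exact I0_le_exp_mul_div_sqrt hρ
      _ = π * ρ ^ (-(1 / 2 : ℝ)) := by
          rw [← mul_assoc, hexp, one_mul, Real.sqrt_eq_rpow, rpow_neg hρ.le, div_eq_mul_inv]
      _ ≤ π * ρ ^ (-a) := by
          gcongr
          exact ha.2

lemma rpow_neg_mul_exp_neg_le {a b : ℝ} (hab : a ∈ Icc b (b + 1)) {ρ : ℝ} (hρ : 0 < ρ) :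
    ρ ^ (-b) * exp (-ρ) ≤ ρ ^ (-a) := by
  have hpow : ρ ^ (a - b) ≤ exp ρ := by
    rcases le_total ρ 1 with hρ1 | hρ1
    · exact (rpow_le_one hρ.le hρ1 (sub_nonneg.2 hab.1)).trans (one_le_exp hρ.le)
    · calc ρ ^ (a - b) ≤ ρ ^ (1 : ℝ) :=
            rpow_le_rpow_of_exponent_le hρ1 (by linarith [hab.2])
        _ ≤ exp ρ := by rw [rpow_one]; linarith [add_one_le_exp ρ]
  calc ρ ^ (-b) * exp (-ρ) = ρ ^ (-a) * (ρ ^ (a - b) * exp (-ρ)) := by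
        rw [← mul_assoc, ← rpow_add hρ]; ring_nf
    _ ≤ ρ ^ (-a) * (exp ρ * exp (-ρ)) := by gcongr
    _ = ρ ^ (-a) := by rw [← Real.exp_add, add_neg_cancel, Real.exp_zero, mul_one]

lemma exists_besselMajorant_le :
    ∃ C : ℝ, ∀ a ∈ Icc (1 / 8 : ℝ) (1 / 2), ∀ ρ > 0, besselMajorant ρ ≤ C * ρ ^ (-a) := by
  obtain ⟨-, C, hC⟩ := hasDecay_K0
  have hC0 : 0 ≤ C := by
    simpa [exp_pos] using (abs_nonneg _).trans (hC 1 one_pos)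
  refine ⟨π * π + C, fun a ha ρ hρ ↦ ?_⟩
  have hI := exp_neg_mul_I0_le ⟨by linarith [ha.1], ha.2⟩ hρ
  have hK : exp (-ρ) * K0 ρ ≤ C * ρ ^ (-a) := by
    have hexp : exp (-(5 / 8) * ρ) ≤ 1 := exp_le_one_iff.2 (by linarith)
    calc exp (-ρ) * K0 ρ ≤ exp (-ρ) * (C * (ρ ^ (-(1 / 8) : ℝ) * exp (-(5 / 8) * ρ))) := by
          gcongr
          exact (le_abs_self _).trans (hC ρ hρ)
      _ ≤ exp (-ρ) * (C * (ρ ^ (-(1 / 8) : ℝ) * 1)) := by gcongr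
      _ = C * (ρ ^ (-(1 / 8) : ℝ) * exp (-ρ)) := by ring
      _ ≤ C * ρ ^ (-a) := by
          gcongr
          exact rpow_neg_mul_exp_neg_le ⟨ha.1, by linarith [ha.2]⟩ hρ
  calc besselMajorant ρ = π * (exp (-ρ) * I0 ρ) + exp (-ρ) * K0 ρ := by
        rw [besselMajorant]; ring
    _ ≤ π * (π * ρ ^ (-a)) + C * ρ ^ (-a) := by gcongr
    _ = (π * π + C) * ρ ^ (-a) := by ring

lemma exists_norm_hankelProduct_le :
    ∃ C : ℝ, ∀ a ∈ Icc (1 / 4 : ℝ) 1, ∀ z ≠ 0, ‖hankelProduct z‖ ≤ C * ‖z‖ ^ (-a) := by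
  obtain ⟨C, hC⟩ := exists_besselMajorant_le
  refine ⟨C ^ 2, fun a ha z hz ↦ ?_⟩
  have hρ : 0 < ‖z‖ := norm_pos_iff.2 hz
  have hmaj := hC (a / 2) ⟨by linarith [ha.1], by linarith [ha.2]⟩ ‖z‖ hρ
  have hfactor {s : ℝ} (hs : |s| = 1) : ‖invSqrtLaplace s 1 (2 * z)‖ ≤ C * ‖z‖ ^ (-(a / 2)) :=
    (norm_invSqrtLaplace_le hs hz).trans hmaj
  calc ‖hankelProduct z‖ =
        ‖invSqrtLaplace 1 1 (2 * z)‖ * ‖invSqrtLaplace (-1) 1 (2 * z)‖ := by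
        rw [hankelProduct, norm_mul, norm_mul, Complex.norm_I, one_mul]
    _ ≤ (C * ‖z‖ ^ (-(a / 2))) * (C * ‖z‖ ^ (-(a / 2))) :=
        mul_le_mul (hfactor (by simp)) (hfactor (by simp)) (norm_nonneg _)
          ((norm_nonneg _).trans (hfactor (s := 1) (by simp)))
    _ = C ^ 2 * ‖z‖ ^ (-a) := by
        rw [mul_mul_mul_comm, ← sq, ← rpow_add hρ]
        ring_nf

/-! ### Sum rules for moments of Bessel functions -/

lemma exists_norm_mul_hankelProduct_pow_le (k : ℕ) :
    ∃ C : ℝ, ∀ a ∈ Icc (1 / 4 : ℝ) 1, ∀ z : ℂ,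
      ‖z * hankelProduct z ^ k‖ ≤ C * ‖z‖ ^ (1 - k * a) := by
  obtain ⟨C, hC⟩ := exists_norm_hankelProduct_le
  have hC0 : 0 ≤ C := by
    simpa using (norm_nonneg _).trans (hC 1 ⟨by norm_num, le_rfl⟩ 1 one_ne_zero)
  refine ⟨C ^ k, fun a ha z ↦ ?_⟩
  rcases eq_or_ne z 0 with rfl | hz
  · simpa using by positivity
  have hρ : 0 < ‖z‖ := norm_pos_iff.2 hz
  calc ‖z * hankelProduct z ^ k‖ = ‖z‖ * ‖hankelProduct z‖ ^ k := by rw [norm_mul, norm_pow]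
    _ ≤ ‖z‖ * (C * ‖z‖ ^ (-a)) ^ k := by gcongr; exact hC a ha z hz
    _ = C ^ k * ‖z‖ ^ (1 - k * a) := by
        rw [mul_pow, ← rpow_natCast (‖z‖ ^ (-a)), ← rpow_mul hρ.le, sub_eq_add_neg, rpow_add hρ,
          rpow_one, show -a * k = -(k * a) by ring]
        ring

lemma continuousOn_mul_hankelProduct_pow {k : ℕ} (hk : k < 4) :
    ContinuousOn (fun z ↦ z * hankelProduct z ^ k) closedQuadrant := by
  intro z _
  rcases eq_or_ne z 0 with rfl | hz
  · obtain ⟨C, hC⟩ := exists_norm_mul_hankelProduct_pow_le k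
    have hexp : (0 : ℝ) < 1 - k * (1 / 4) := by
      have : (k : ℝ) < 4 := by exact_mod_cast hk
      linarith
    have hbound : Tendsto (fun z : ℂ ↦ C * ‖z‖ ^ (1 - k * (1 / 4) : ℝ)) (𝓝 0) (𝓝 0) := by
      have := (continuous_norm.rpow_const fun z : ℂ ↦ Or.inr hexp.le).const_mul C |>.tendsto 0
      rwa [norm_zero, zero_rpow hexp.ne', mul_zero] at this
    have hlim := squeeze_zero_norm (hC (1 / 4) ⟨le_rfl, by norm_num⟩) hbound
    refine ContinuousAt.continuousWithinAt ?_
    simpa [ContinuousAt] using hlim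
  · exact (continuousWithinAt_id.mul ((continuousWithinAt_hankelProduct hz).pow k)).mono
      fun v hv ↦ hv.2

lemma integral_im_mul_hankelProduct_pow {k : ℕ} (hk2 : 2 ≤ k) (hk4 : k < 4) {c : ℂ}
    (hray : ∀ z ∈ closedQuadrant, 0 < z.im →
      Tendsto (fun T : ℝ ↦ T * (T * z * hankelProduct (T * z) ^ k)) atTop (𝓝 (c / z)))
    (hint : IntegrableOn (fun x : ℝ ↦ (x * hankelProduct x ^ k).im) (Ioi 0)) :
    ∫ x in Ioi (0 : ℝ), (x * hankelProduct x ^ k).im = -(π / 2) * c.re := by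
  obtain ⟨C, hC⟩ := exists_norm_mul_hankelProduct_pow_le k
  have hk0 : (k : ℝ) ≠ 0 := by exact_mod_cast (by lia : k ≠ 0)
  have hk2' : (2 : ℝ) ≤ k := by exact_mod_cast hk2
  have hk4' : (k : ℝ) < 4 := by exact_mod_cast hk4
  refine tendsto_nhds_unique (intervalIntegral_tendsto_integral_Ioi 0 hint tendsto_id)
    (tendsto_integral_im_atTop (F := fun z ↦ z * hankelProduct z ^ k) (C := C)
      (continuousOn_mul_hankelProduct_pow hk4) (fun z hz ↦ ?_) (fun y hy ↦ ?_)
      (fun z _ hz ↦ ?_) hray)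
  · exact (differentiableAt_id.mul
      ((differentiableAt_hankelProduct hz.2).pow k)).differentiableWithinAt
  · obtain ⟨r, hr⟩ := exists_hankelProduct_eq_ofReal hy
    rw [hr, mul_right_comm, ← Complex.ofReal_pow, ← Complex.ofReal_mul, Complex.re_ofReal_mul,
      Complex.I_re, mul_zero]
  · have : 0 < ‖z‖ := zero_lt_one.trans_le hz
    have h := hC (2 / k) ⟨by rw [div_le_div_iff₀] <;> linarith, by rw [div_le_one] <;> linarith⟩ z
    rw [mul_div_cancel₀ _ hk0, show (1 - 2 : ℝ) = -1 by norm_num, rpow_neg_one] at h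
    calc ‖z * (z * hankelProduct z ^ k)‖ = ‖z‖ * ‖z * hankelProduct z ^ k‖ := norm_mul _ _
      _ ≤ ‖z‖ * (C * ‖z‖⁻¹) := by gcongr
      _ = C := by field_simp

lemma im_mul_hankelProduct_sq {x : ℝ} (hx : 0 < x) :
    (x * hankelProduct x ^ 2).im = 2 * π * (x ^ 1 * besselQuartic 0 x) := by
  have h : (x * hankelProduct x ^ 2 : ℂ) = (x * K0 x ^ 2 * (K0 x ^ 2 - π ^ 2 * I0 x ^ 2) : ℝ) +
      (2 * π * (x ^ 1 * besselQuartic 0 x) : ℝ) * Complex.I := by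
    rw [hankelProduct_ofReal hx, besselQuartic_zero]
    push_cast
    linear_combination (x * K0 x ^ 2 * (π * I0 x) ^ 2 : ℂ) * Complex.I_sq
  rw [h, Complex.add_im, Complex.ofReal_im, zero_add, Complex.im_ofReal_mul, Complex.I_im, mul_one]

lemma im_mul_hankelProduct_cube {x : ℝ} (hx : 0 < x) :
    (x * hankelProduct x ^ 3).im =
      3 * π * (I0 x * K0 x ^ 5 * x) - π ^ 3 * (I0 x ^ 3 * K0 x ^ 3 * x) := by
  have h : (x * hankelProduct x ^ 3 : ℂ) =
      (x * K0 x ^ 4 * (K0 x ^ 2 - 3 * π ^ 2 * I0 x ^ 2) : ℝ) +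
      (3 * π * (I0 x * K0 x ^ 5 * x) - π ^ 3 * (I0 x ^ 3 * K0 x ^ 3 * x) : ℝ) * Complex.I := by
    rw [hankelProduct_ofReal hx]
    push_cast
    linear_combination (x * K0 x ^ 3 * (π * I0 x) ^ 2 * (3 * K0 x + Complex.I * π * I0 x) : ℂ) *
      Complex.I_sq
  rw [h, Complex.add_im, Complex.ofReal_im, zero_add, Complex.im_ofReal_mul, Complex.I_im, mul_one]

theorem quarticMoment_one_zero : quarticMoment 1 0 = π ^ 2 / 16 := by
  have hintegrand : EqOn (fun x ↦ 2 * π * (x ^ 1 * besselQuartic 0 x))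
      (fun x : ℝ ↦ (x * hankelProduct x ^ 2).im) (Ioi 0) :=
    fun x hx ↦ (im_mul_hankelProduct_sq hx).symm
  have h := integral_im_mul_hankelProduct_pow (k := 2) (c := -(π ^ 2 / 4 : ℝ)) le_rfl (by norm_num)
    (fun z _ hz ↦ ?_)
    (IntegrableOn.congr_fun ((integrableOn_pow_mul_besselQuartic 1 0).const_mul _) hintegrand
      measurableSet_Ioi)
  · rw [← setIntegral_congr_fun measurableSet_Ioi hintegrand, integral_const_mul,
      Complex.neg_re, Complex.ofReal_re] at h
    rw [quarticMoment]
    have := pi_pos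
    field_simp at h ⊢
    linarith
  · have hz0 : z ≠ 0 := fun h ↦ by simp [h] at hz
    have hlim := ((tendsto_mul_hankelProduct_atTop hz).pow 2).const_mul z
    have hval : z * (Complex.I * π / (2 * z)) ^ 2 = -(π ^ 2 / 4 : ℝ) / z := by
      push_cast
      field_simp
      linear_combination (4 : ℂ) * Complex.I_sq
    rw [hval] at hlim
    exact hlim.congr fun T ↦ by ring

lemma tendsto_mul_hankelProduct_cube {z : ℂ} (hz : 0 < z.im) :
    Tendsto (fun T : ℝ ↦ T * (T * z * hankelProduct (T * z) ^ 3)) atTop (𝓝 (0 / z)) := by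
  have hinv : Tendsto (fun T : ℝ ↦ ((T⁻¹ : ℝ) : ℂ)) atTop (𝓝 0) :=
    (Complex.continuous_ofReal.tendsto 0).comp tendsto_inv_atTop_zero
  have hlim := (((tendsto_mul_hankelProduct_atTop hz).pow 3).const_mul z).mul hinv
  rw [mul_zero, ← zero_div z] at hlim
  refine hlim.congr' ?_
  filter_upwards [eventually_gt_atTop 0] with T hT
  have hT' : (T : ℂ) ≠ 0 := by exact_mod_cast hT.ne'
  push_cast
  field_simp

lemma integrableOn_mul_hankelProduct_cube :
    IntegrableOn (fun x : ℝ ↦ (x * hankelProduct x ^ 3 : ℂ)) (Ioi 0) := by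
  obtain ⟨C, hC⟩ := exists_norm_mul_hankelProduct_pow_le 3
  have hcont : ContinuousOn (fun x : ℝ ↦ (x * hankelProduct x ^ 3 : ℂ)) (Ici 0) :=
    (continuousOn_mul_hankelProduct_pow (by norm_num)).comp Complex.continuous_ofReal.continuousOn
      fun x hx ↦ mem_closedQuadrant.2 ⟨hx, (Complex.ofReal_im x).ge⟩
  rw [← Ioc_union_Ioi_eq_Ioi (zero_le_one (α := ℝ))]
  refine IntegrableOn.union ((hcont.mono Icc_subset_Ici_self).integrableOn_Icc.mono_set
    Ioc_subset_Icc_self) ?_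
  refine ((integrableOn_Ioi_rpow_of_lt (a := -2) (by norm_num) one_pos).const_mul C).mono'
    ((hcont.mono fun x (hx : 1 < x) ↦ (zero_lt_one.trans hx).le).aestronglyMeasurable
      measurableSet_Ioi) ?_
  filter_upwards [ae_restrict_mem measurableSet_Ioi] with x hx
  have h := hC 1 ⟨by norm_num, le_rfl⟩ x
  rwa [Complex.norm_of_nonneg (zero_lt_one.trans hx).le,
    show (1 - (3 : ℕ) * 1 : ℝ) = -2 by norm_num] at h

theorem three_mul_integral_I0_mul_K0_pow_five :
    3 * ∫ t in Ioi (0 : ℝ), I0 t * K0 t ^ 5 * t =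
      π ^ 2 * ∫ t in Ioi (0 : ℝ), I0 t ^ 3 * K0 t ^ 3 * t := by
  have him : IntegrableOn (fun x : ℝ ↦ (x * hankelProduct x ^ 3).im) (Ioi 0) :=
    integrableOn_mul_hankelProduct_cube.im
  have hfive : IntegrableOn (fun t ↦ I0 t * K0 t ^ 5 * t) (Ioi 0) := by
    simpa using ((hasDecay_I0.mul (hasDecay_K0.pow 5)).mul (HasDecay.pow_id 1)).integrableOn
      (by norm_num) (by norm_num)
  have hcube : IntegrableOn (fun t ↦ I0 t ^ 3 * K0 t ^ 3 * t) (Ioi 0) := by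
    refine IntegrableOn.congr_fun
      (((hfive.const_mul (3 * π)).sub him).const_mul (π ^ 3)⁻¹) (fun x hx ↦ ?_) measurableSet_Ioi
    have := pi_pos
    simp only [Pi.sub_apply]
    rw [im_mul_hankelProduct_cube hx, sub_sub_cancel, inv_mul_cancel_left₀ (by positivity)]
  have h := integral_im_mul_hankelProduct_pow (k := 3) (c := 0) (by norm_num) (by norm_num)
    (fun z _ hz ↦ tendsto_mul_hankelProduct_cube hz) him
  rw [setIntegral_congr_fun measurableSet_Ioi fun x hx ↦ im_mul_hankelProduct_cube hx,
    integral_sub (hfive.const_mul _) (hcube.const_mul _), integral_const_mul, integral_const_mul,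
    Complex.zero_re, mul_zero] at h
  refine mul_left_cancel₀ pi_ne_zero ?_
  linarith

theorem watson_one_eq_sunrise :
    (1 / (4 * π^4)) *
      (∫ p1 in (0:ℝ)..π, ∫ p2 in (0:ℝ)..π, ∫ p3 in (0:ℝ)..π, ∫ p4 in (0:ℝ)..π,
        1 / (1 - (1/4) * (cos p1 + cos p2 + cos p3 + cos p4)))
    = (12 / π^4) * ∫ t in Ioi (0:ℝ), I0 t * (K0 t)^5 * t := by
  have hcube : ∫ t in Ioi (0 : ℝ), I0 t ^ 3 * K0 t ^ 3 * t = π ^ 2 / 4 * laplaceI0Pow 4 4 := by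
    rw [integral_I0_cube_mul_K0_cube, quarticMoment_one_zero, laplaceI0Pow]
    ring
  calc _ = laplaceI0Pow 4 4 := watson_eq_laplaceI0Pow
    _ = 4 / π ^ 4 * (π ^ 2 * ∫ t in Ioi (0 : ℝ), I0 t ^ 3 * K0 t ^ 3 * t) := by
        rw [hcube]
        field_simp
    _ = 4 / π ^ 4 * (3 * ∫ t in Ioi (0 : ℝ), I0 t * K0 t ^ 5 * t) := by
        rw [three_mul_integral_I0_mul_K0_pow_five]
    _ = 12 / π ^ 4 * ∫ t in Ioi (0 : ℝ), I0 t * K0 t ^ 5 * t := by ring
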